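/- Let T = {(x₁,x₂) ∈ ℝ² : x₁ > 0, x₂ > 0, x₁ + x₂ < 1}, α, β, γ > −1, ρ(x₁,x₂) = x₁^α x₂^β (1−x₁−x₂)^γ, and Φ(x₁,x₂) = [[x₁(1−x₁), −x₁x₂], [−x₁x₂, x₂(1−x₂)]]. Then L²(T,ρ) admits an orthogonal basis {u_n}_{n≥0} consisting of weak eigenfunctions of the degenerate Helmholtz operator: each u_n ∈ W(T,ρ,ρΦ) and there is ν_n ∈ ℝ with ∫_T (∇v)ᵗ ρΦ ∇u_n dx₁dx₂ + ∫_T (2+x₁²+x₂²) u_n v ρ dx₁dx₂ = ν_n ∫_T u_n v ρ dx₁dx₂ for all v ∈ W(T,ρ,ρΦ); moreover every eigenvalue ν_n is positive and the sequence {ν_n} can be ordered so that ν_n → +∞. -/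

import Mathlib

open MeasureTheory Filter

noncomputable section

abbrev Poly2 := MvPolynomial (Fin 2) ℝ

/-- Evaluation of a two-variable real polynomial at a point of `ℝ × ℝ`. -/
def pev (p : Poly2) (x : ℝ × ℝ) : ℝ := MvPolynomial.eval ![x.1, x.2] p

/-- `uᵗ Φ v` where `Φ` is the matrix with polynomial entries `p11 p12 p21 p22`. -/
def bilPhi (p11 p12 p21 p22 : Poly2) (x u v : ℝ × ℝ) : ℝ :=
  u.1 * (pev p11 x * v.1 + pev p12 x * v.2) + u.2 * (pev p21 x * v.1 + pev p22 x * v.2)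

/-- The (classical) gradient of a two-variable polynomial. -/
def polyGrad (p : Poly2) (x : ℝ × ℝ) : ℝ × ℝ :=
  (pev (MvPolynomial.pderiv (0 : Fin 2) p) x, pev (MvPolynomial.pderiv (1 : Fin 2) p) x)

/-- `ρ` is a weight function on `Ω`. -/
def IsWeight (Ω : Set (ℝ × ℝ)) (ρ : ℝ × ℝ → ℝ) : Prop :=
  Measurable ρ ∧ (∀ᵐ x ∂(volume.restrict Ω), 0 < ρ x) ∧ IntegrableOn ρ Ω

/-- `ρ` is a moment weight function on `Ω`. -/
def IsMomentWeight (Ω : Set (ℝ × ℝ)) (ρ : ℝ × ℝ → ℝ) : Prop :=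
  Measurable ρ ∧ (∀ᵐ x ∂(volume.restrict Ω), 0 < ρ x) ∧
    ∀ m n : ℕ, IntegrableOn (fun x : ℝ × ℝ => |x.1| ^ m * |x.2| ^ n * ρ x) Ω

/-- `Φ` is symmetric and positive definite at every point of `Ω`. -/
def SymPosDef (Ω : Set (ℝ × ℝ)) (p11 p12 p21 p22 : Poly2) : Prop :=
  p12 = p21 ∧ ∀ x ∈ Ω, ∀ ζ : ℝ × ℝ, ζ ≠ 0 → 0 < bilPhi p11 p12 p21 p22 x ζ ζ

/-- `Φ` is symmetric, has entries of degree at most 2, and is positive definite on `Ω`. -/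
def GoodPhi (Ω : Set (ℝ × ℝ)) (p11 p12 p21 p22 : Poly2) : Prop :=
  SymPosDef Ω p11 p12 p21 p22 ∧ p11.totalDegree ≤ 2 ∧ p12.totalDegree ≤ 2 ∧
    p21.totalDegree ≤ 2 ∧ p22.totalDegree ≤ 2

/-- The Pearson equation `div(ρΦ) = ρ(ψ₁,ψ₂)` with explicit degree-one polynomials
`ψⱼ(x) = d_{j1} x₁ + d_{j2} x₂ + e_j` having linearly independent linear parts. -/
def PearsonWith (Ω : Set (ℝ × ℝ)) (ρ : ℝ × ℝ → ℝ) (p11 p12 p21 p22 : Poly2)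
    (d11 d12 d21 d22 e1 e2 : ℝ) : Prop :=
  ContDiffOn ℝ 1 ρ Ω ∧ d11 * d22 - d12 * d21 ≠ 0 ∧
    (∀ x ∈ Ω,
      fderiv ℝ (fun y => ρ y * pev p11 y) x (1, 0) +
        fderiv ℝ (fun y => ρ y * pev p21 y) x (0, 1) = ρ x * (d11 * x.1 + d12 * x.2 + e1)) ∧
    (∀ x ∈ Ω,
      fderiv ℝ (fun y => ρ y * pev p12 y) x (1, 0) +
        fderiv ℝ (fun y => ρ y * pev p22 y) x (0, 1) = ρ x * (d21 * x.1 + d22 * x.2 + e2))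

/-- The Pearson equation `div(ρΦ) = ρ(ψ₁,ψ₂)` for some admissible `ψ₁, ψ₂`. -/
def Pearson (Ω : Set (ℝ × ℝ)) (ρ : ℝ × ℝ → ℝ) (p11 p12 p21 p22 : Poly2) : Prop :=
  ∃ d11 d12 d21 d22 e1 e2 : ℝ, PearsonWith Ω ρ p11 p12 p21 p22 d11 d12 d21 d22 e1 e2

/-- `div(ρΦv)` for a pair of polynomials `v = (v1, v2)`. -/
def divRhoPhi (ρ : ℝ × ℝ → ℝ) (p11 p12 p21 p22 v1 v2 : Poly2) (x : ℝ × ℝ) : ℝ :=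
  fderiv ℝ (fun y => ρ y * (pev p11 y * pev v1 y + pev p12 y * pev v2 y)) x (1, 0) +
    fderiv ℝ (fun y => ρ y * (pev p21 y * pev v1 y + pev p22 y * pev v2 y)) x (0, 1)

/-- Membership in `L²(Ω, ρ)`. -/
def MemL2 (Ω : Set (ℝ × ℝ)) (ρ : ℝ × ℝ → ℝ) (u : ℝ × ℝ → ℝ) : Prop :=
  Measurable u ∧ IntegrableOn (fun x => u x ^ 2 * ρ x) Ω

/-- Membership in the matrix-weighted Lebesgue space `L²(Ω, ρΦ)`. -/
def MemL2M (Ω : Set (ℝ × ℝ)) (ρ : ℝ × ℝ → ℝ) (p11 p12 p21 p22 : Poly2)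
    (w : ℝ × ℝ → ℝ × ℝ) : Prop :=
  Measurable w ∧ IntegrableOn (fun x => ρ x * bilPhi p11 p12 p21 p22 x (w x) (w x)) Ω

/-- `h` is a weak gradient of `u`. -/
def IsWeakGrad (Ω : Set (ℝ × ℝ)) (ρ : ℝ × ℝ → ℝ) (p11 p12 p21 p22 : Poly2)
    (u : ℝ × ℝ → ℝ) (h : ℝ × ℝ → ℝ × ℝ) : Prop :=
  MemL2M Ω ρ p11 p12 p21 p22 h ∧
    ∀ v1 v2 : Poly2,
      ∫ x in Ω, u x * divRhoPhi ρ p11 p12 p21 p22 v1 v2 x =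
        - ∫ x in Ω, ρ x * bilPhi p11 p12 p21 p22 x (h x) (pev v1 x, pev v2 x)

/-- Membership in `W(Ω, ρ, ρΦ)`, the closure of the polynomials in `W^{1,2}(Ω, ρ, ρΦ)`,
for a function `u` with weak gradient `g`. -/
def MemW (Ω : Set (ℝ × ℝ)) (ρ : ℝ × ℝ → ℝ) (p11 p12 p21 p22 : Poly2)
    (u : ℝ × ℝ → ℝ) (g : ℝ × ℝ → ℝ × ℝ) : Prop :=
  MemL2 Ω ρ u ∧ IsWeakGrad Ω ρ p11 p12 p21 p22 u g ∧
    ∀ ε : ℝ, 0 < ε → ∃ q : Poly2,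
      (∫ x in Ω, (u x - pev q x) ^ 2 * ρ x) +
        (∫ x in Ω, ρ x * bilPhi p11 p12 p21 p22 x (g x - polyGrad q x) (g x - polyGrad q x))
          < ε ^ 2

/-- The open triangle with vertices `(0,0)`, `(1,0)`, `(0,1)`. -/
def Ttri : Set (ℝ × ℝ) := {x : ℝ × ℝ | 0 < x.1 ∧ 0 < x.2 ∧ x.1 + x.2 < 1}

/-- The Jacobi-type weight `ρ(x) = x₁^α x₂^β (1−x₁−x₂)^γ`. -/
def rhoT (α β γ : ℝ) (x : ℝ × ℝ) : ℝ :=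
  x.1 ^ α * x.2 ^ β * (1 - x.1 - x.2) ^ γ

/-- The entry `φ₁₁ = x₁(1−x₁)` of the triangle matrix `Φ`. -/
def q11 : Poly2 := MvPolynomial.X 0 * (1 - MvPolynomial.X 0)

/-- The entry `φ₁₂ = φ₂₁ = −x₁x₂` of the triangle matrix `Φ`. -/
def q12 : Poly2 := -(MvPolynomial.X 0 * MvPolynomial.X 1)

/-- The entry `φ₂₂ = x₂(1−x₂)` of the triangle matrix `Φ`. -/
def q22 : Poly2 := MvPolynomial.X 1 * (1 - MvPolynomial.X 1)

/-- The classical gradient of a function of two variables. -/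
def gradF (u : ℝ × ℝ → ℝ) (x : ℝ × ℝ) : ℝ × ℝ :=
  (fderiv ℝ u x (1, 0), fderiv ℝ u x (0, 1))

/-!
On polynomials the operator `L u = -ρ⁻¹ div(ρΦ∇u)` is symmetric and nonnegative for `⟨·,·⟩_ρ`, and
by Euler's identity it acts on polynomials of degree `n`, modulo lower degree, as the scalar
`n (n + α + β + γ + 2)`. Being symmetric and triangular with respect to the degree, it has
orthogonal polynomial eigenvectors with these eigenvalues, which tend to infinity. Hence a function
in `W(T, ρ, ρΦ)` orthogonal to the polynomials of degree at most `n` has `L²` norm at most a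
vanishing multiple of its energy norm, so that the embedding `J` of `W(T, ρ, ρΦ)`, with inner
product `∫ (∇v)ᵗ ρΦ ∇u + ∫ V u v ρ`, into `L²(T, ρ)` is a limit of finite rank operators. The weak
eigenfunctions are the eigenvectors of the compact positive operator `J J*` and the `ν_n` are the
reciprocals of its eigenvalues.
-/

open scoped InnerProductSpace Topology

/-! ### Compact embeddings and triangular operators -/

theorem nonempty_orderIso_nat_of_finite_Iic {ι : Type*} [LinearOrder ι] [Infinite ι]
    (h : ∀ i : ι, (Set.Iic i).Finite) : Nonempty (ℕ ≃o ι) := by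
  have hrank : StrictMono fun i : ι => (Set.Iio i).ncard := fun i j hij =>
    Set.ncard_lt_ncard (Set.Iio_ssubset_Iio hij) ((h j).subset Set.Iio_subset_Iic_self)
  have : Infinite (Set.range fun i : ι => (Set.Iio i).ncard) :=
    Infinite.of_injective _ hrank.orderIso.injective
  exact ⟨(Nat.Subtype.orderIsoOfNat _).trans hrank.orderIso.symm⟩

theorem exists_equiv_nat_monotone_comp {ι α : Type*} [Infinite ι] [LinearOrder α] (ν : ι → α)
    (h : ∀ i, {j | ν j ≤ ν i}.Finite) : ∃ e : ℕ ≃ ι, Monotone (ν ∘ e) := by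
  classical
  let : LinearOrder ι := linearOrderOfSTO WellOrderingRel
  let g : ι → α ×ₗ ι := fun i => toLex (ν i, i)
  have hg : Function.Injective g := fun i j hij => congrArg (fun z => (ofLex z).2) hij
  have hν {i j : ι} (hij : g i ≤ g j) : ν i ≤ ν j := by
    rcases Prod.Lex.toLex_le_toLex.1 hij with hlt | heq
    exacts [hlt.le, heq.1.le]
  let f : ι ≃ Set.range g := Equiv.ofInjective g hg
  have : Infinite (Set.range g) := Infinite.of_injective f f.injective
  have hIic : ∀ y : Set.range g, (Set.Iic y).Finite := by
    rintro ⟨_, i, rfl⟩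
    refine ((h i).image f).subset ?_
    rintro ⟨_, j, rfl⟩ hj
    exact ⟨j, hν hj, rfl⟩
  obtain ⟨o⟩ := nonempty_orderIso_nat_of_finite_Iic hIic
  refine ⟨o.toEquiv.trans f.symm, fun m n hmn => hν ?_⟩
  have hgf (y : Set.range g) : g (f.symm y) = y := congrArg Subtype.val (f.apply_symm_apply y)
  simp only [Equiv.trans_apply, hgf]
  exact o.monotone hmn

universe u v

section CompactOperator

variable {𝕜 : Type u} {H : Type v} [RCLike 𝕜] [NormedAddCommGroup H] [InnerProductSpace 𝕜 H]

theorem norm_le_norm_smul_sub_smul_of_orthonormal {ι : Type*} {e : ι → H} (he : Orthonormal 𝕜 e)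
    {i j : ι} (hij : i ≠ j) (a b : 𝕜) : ‖a‖ ≤ ‖a • e i - b • e j‖ := by
  have hinner : ⟪e i, a • e i - b • e j⟫_𝕜 = a := by
    simp [inner_sub_right, inner_smul_right, he.2 hij, inner_self_eq_norm_sq_to_K, he.1]
  simpa [hinner, he.1] using norm_inner_le_norm (𝕜 := 𝕜) (e i) (a • e i - b • e j)

theorem finite_setOf_le_norm_eigenvalue {ι : Type*} {T : H →L[𝕜] H} (hT : IsCompactOperator T)
    {e : ι → H} (he : Orthonormal 𝕜 e) {κ : ι → 𝕜} (hκ : ∀ i, T (e i) = κ i • e i)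
    {r : ℝ} (hr : 0 < r) : {i | r ≤ ‖κ i‖}.Finite := by
  by_contra hinf
  let s := Set.Infinite.natEmbedding _ hinf
  obtain ⟨C, hC, hTC⟩ := hT.image_closedBall_subset_compact (f := (T : H →ₗ[𝕜] H)) 1
  have hmem (n : ℕ) : T (e (s n)) ∈ C := hTC ⟨e (s n), by simp [he.1], rfl⟩
  obtain ⟨_, -, φ, hφ, hlim⟩ := hC.tendsto_subseq hmem
  obtain ⟨N, hN⟩ := Metric.cauchySeq_iff'.1 hlim.cauchySeq r hr
  have hne : (s (φ (N + 1)) : ι) ≠ s (φ N) := fun h =>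
    N.succ_ne_self (hφ.injective (s.injective (Subtype.ext h)))
  have hclose := hN (N + 1) N.le_succ
  simp only [Function.comp_apply, dist_eq_norm, hκ] at hclose
  exact ((s (φ (N + 1))).2.trans
    (norm_le_norm_smul_sub_smul_of_orthonormal he hne _ _)).not_gt hclose

theorem infinite_of_hilbertBasis {ι : Type*} (b : HilbertBasis ι 𝕜 H)
    (hH : ¬ FiniteDimensional 𝕜 H) : Infinite ι := by
  refine not_finite_iff_infinite.1 fun hι => hH ?_
  have := Fintype.ofFinite ι
  exact b.toOrthonormalBasis.toBasis.finiteDimensional_of_finite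

open Module Module.End in
theorem exists_hilbertBasis_eigenvectors [CompleteSpace H] {T : H →L[𝕜] H}
    (hT : IsCompactOperator T) (hsymm : T.IsSymmetric) :
    ∃ (ι : Type (max u v)) (b : HilbertBasis ι 𝕜 H) (κ : ι → 𝕜), ∀ i, T (b i) = κ i • b i := by
  have hcomplete (μ : 𝕜) : CompleteSpace (eigenspace (T : End 𝕜 H) μ) :=
    IsClosed.completeSpace_coe
  choose w b _ using fun μ : 𝕜 => exists_hilbertBasis 𝕜 (eigenspace (T : End 𝕜 H) μ)
  let v : (Σ μ, w μ) → H := fun i => b i.1 i.2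
  have hv : Orthonormal 𝕜 v := hsymm.orthogonalFamily_eigenspaces.orthonormal_sigma_orthonormal
    (v_family := fun μ => b μ) fun μ => (b μ).orthonormal
  have hspan (μ : 𝕜) : eigenspace (T : End 𝕜 H) μ ≤
      (Submodule.span 𝕜 (Set.range v)).topologicalClosure := by
    intro x hx
    have hcl : (⟨x, hx⟩ : eigenspace (T : End 𝕜 H) μ) ∈
        (Submodule.span 𝕜 (Set.range (b μ))).topologicalClosure :=
      (b μ).dense_span ▸ Submodule.mem_top
    refine map_mem_closure (f := (eigenspace (T : End 𝕜 H) μ).subtype) continuous_subtype_val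
      hcl fun y hy => ?_
    refine Submodule.span_induction ?_ ?_ ?_ ?_ hy
    · rintro _ ⟨i, rfl⟩
      exact Submodule.subset_span ⟨⟨μ, i⟩, rfl⟩
    · exact Submodule.zero_mem _
    · exact fun _ _ _ _ => Submodule.add_mem _
    · exact fun c _ _ => Submodule.smul_mem _ c
  have hbot : (Submodule.span 𝕜 (Set.range v))ᗮ = ⊥ := by
    rw [← Submodule.orthogonal_closure, eq_bot_iff,
      ← ContinuousLinearMap.orthogonalComplement_iSup_eigenspaces_eq_bot hT hsymm]
    exact Submodule.orthogonal_le (iSup_le hspan)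
  refine ⟨_, HilbertBasis.mkOfOrthogonalEqBot hv hbot, Sigma.fst, fun i => ?_⟩
  rw [HilbertBasis.coe_mkOfOrthogonalEqBot]
  exact mem_eigenspace_iff.1 (b i.1 i.2).2

theorem isCompactOperator_of_norm_sub_starProjection_le {W : Type*} [NormedAddCommGroup W]
    [NormedSpace 𝕜 W] [CompleteSpace H] {T : W →L[𝕜] H} (S : ℕ → Submodule 𝕜 H)
    [∀ n, FiniteDimensional 𝕜 (S n)] {c : ℕ → ℝ} (hc : Tendsto c atTop (𝓝 0))
    (h : ∀ᶠ n in atTop, ∀ w, ‖T w - (S n).starProjection (T w)‖ ≤ c n * ‖w‖) :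
    IsCompactOperator T := by
  have hlim : Tendsto (fun n => (S n).starProjection.comp T) atTop (𝓝 T) := by
    refine tendsto_iff_norm_sub_tendsto_zero.2 <|
      squeeze_zero' (Eventually.of_forall fun _ => norm_nonneg _) ?_ (by simpa using hc.abs)
    filter_upwards [h] with n hn
    refine ContinuousLinearMap.opNorm_le_bound _ (abs_nonneg _) fun w => ?_
    rw [sub_apply, norm_sub_rev]
    exact (hn w).trans (by gcongr; exact le_abs_self _)
  refine isCompactOperator_of_tendsto hlim (Eventually.of_forall fun n => ?_)
  have : LocallyCompactSpace (S n) := .of_finiteDimensional_of_complete 𝕜 _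
  exact (isCompactOperator_of_locallyCompactSpace_rng (S n).subtypeL).comp_clm
    ((S n).orthogonalProjectionOnto.comp T)

end CompactOperator

section CompactEmbedding

variable {H : Type v} {W : Type*} [NormedAddCommGroup H] [InnerProductSpace ℝ H]
  [CompleteSpace H] [NormedAddCommGroup W] [InnerProductSpace ℝ W] [CompleteSpace W] {J : W →L[ℝ] H}

open ContinuousLinearMap (adjoint)

theorem pos_of_comp_adjoint_apply_eq_smul (hJ : DenseRange J) {κ : ℝ} {x : H} (hx : x ≠ 0)
    (h : J (adjoint J x) = κ • x) : 0 < κ := by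
  have hker : adjoint J x ≠ 0 := by
    intro h0
    have hrange : x ∈ J.rangeᗮ := J.orthogonal_range ▸ h0
    rw [Submodule.topologicalClosure_eq_top_iff.1
      ((Submodule.dense_iff_topologicalClosure_eq_top (s := J.range)).1 hJ)] at hrange
    exact hx ((Submodule.mem_bot ℝ).1 hrange)
  have hnorm : ‖adjoint J x‖ ^ 2 = κ * ‖x‖ ^ 2 := by
    rw [← real_inner_self_eq_norm_sq, ContinuousLinearMap.adjoint_inner_left, h,
      real_inner_smul_right, real_inner_self_eq_norm_sq]
  exact pos_of_mul_pos_left (hnorm ▸ by positivity) (sq_nonneg ‖x‖)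

theorem exists_hilbertBasis_inner_eq_mul_inner (hJ : IsCompactOperator J) (hd : DenseRange J) :
    ∃ (ι : Type v) (b : HilbertBasis ι ℝ H) (y : ι → W) (ν : ι → ℝ), (∀ i, J (y i) = b i) ∧
      (∀ i z, ⟪y i, z⟫_ℝ = ν i * ⟪b i, J z⟫_ℝ) ∧ (∀ i, 0 < ν i) ∧
      ∀ R, {i | ν i ≤ R}.Finite := by
  let K : H →L[ℝ] H := J ∘L adjoint J
  have hK : IsCompactOperator K := hJ.comp_clm _
  have hsymm : K.IsSymmetric := fun x y => by
    change ⟪J (adjoint J x), y⟫_ℝ = ⟪x, J (adjoint J y)⟫_ℝ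
    rw [← ContinuousLinearMap.adjoint_inner_right, ContinuousLinearMap.adjoint_inner_left]
  obtain ⟨ι, b, κ, hκ⟩ := exists_hilbertBasis_eigenvectors hK hsymm
  have hpos (i : ι) : 0 < κ i :=
    pos_of_comp_adjoint_apply_eq_smul hd (b.orthonormal.ne_zero i) (hκ i)
  refine ⟨ι, b, fun i => (κ i)⁻¹ • adjoint J (b i), fun i => (κ i)⁻¹, fun i => ?_, fun i z => ?_,
    fun i => inv_pos.2 (hpos i), fun R => ?_⟩
  · rw [map_smul]
    exact (inv_smul_eq_iff₀ (hpos i).ne').2 (hκ i)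
  · rw [real_inner_smul_left, ContinuousLinearMap.adjoint_inner_left]
  · rcases le_or_gt R 0 with hR | hR
    · exact Set.finite_empty.subset fun i hi => ((inv_pos.2 (hpos i)).trans_le hi).not_ge hR
    · refine (finite_setOf_le_norm_eigenvalue hK b.orthonormal hκ (inv_pos.2 hR)).subset
        fun i hi => ?_
      exact (inv_le_of_inv_le₀ (hpos i) hi).trans (le_abs_self _)

theorem exists_orthonormal_seq_inner_eq_mul_inner (hJ : IsCompactOperator J) (hd : DenseRange J)
    (hH : ¬ FiniteDimensional ℝ H) :
    ∃ (y : ℕ → W) (ν : ℕ → ℝ), Orthonormal ℝ (fun n => J (y n)) ∧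
      (Submodule.span ℝ (Set.range fun n => J (y n))).topologicalClosure = ⊤ ∧
      (∀ n z, ⟪y n, z⟫_ℝ = ν n * ⟪J (y n), J z⟫_ℝ) ∧
      (∀ n, 0 < ν n) ∧ Monotone ν ∧ Tendsto ν atTop atTop := by
  obtain ⟨ι, b, y, ν, hJy, hinner, hpos, hfin⟩ := exists_hilbertBasis_inner_eq_mul_inner hJ hd
  have := infinite_of_hilbertBasis b hH
  obtain ⟨e, hmono⟩ := exists_equiv_nat_monotone_comp ν fun i => hfin (ν i)
  refine ⟨y ∘ e, ν ∘ e, ?_, ?_, fun n => ?_, fun n => hpos (e n), hmono, ?_⟩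
  · simp only [Function.comp_apply, hJy]
    exact b.orthonormal.comp e e.injective
  · simp only [Function.comp_apply, hJy]
    exact (e.surjective.range_comp b).symm ▸ b.dense_span
  · simpa only [Function.comp_apply, hJy] using hinner (e n)
  · refine tendsto_atTop_atTop_of_monotone hmono fun R => ?_
    by_contra! hR
    exact Set.infinite_univ <|
      ((hfin R).preimage e.injective.injOn).subset fun n _ => (hR n).le

end CompactEmbedding

section TriangularOperator

variable {V H : Type*} [AddCommGroup V] [Module ℝ V] [NormedAddCommGroup H]
  [InnerProductSpace ℝ H]

/-- `L` is a nonnegative symmetric operator on `V`, for the inner product pulled back from `H`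
along `i`, which is triangular for the filtration `S`: it maps each `S n` to itself and acts on
`S (n + 1) / S n` as the scalar `lam (n + 1)`. -/
structure IsTriangularOperator (i : V →ₗ[ℝ] H) (L : V →ₗ[ℝ] V) (S : ℕ → Submodule ℝ V)
    (lam : ℕ → ℝ) : Prop where
  symm : ∀ p q, ⟪i (L p), i q⟫_ℝ = ⟪i (L q), i p⟫_ℝ
  nonneg : ∀ p, 0 ≤ ⟪i (L p), i p⟫_ℝ
  monotone_filtration : Monotone S
  map_mem : ∀ n, ∀ p ∈ S n, L p ∈ S n
  sub_smul_mem : ∀ n, ∀ p ∈ S (n + 1), L p - lam (n + 1) • p ∈ S n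

namespace IsTriangularOperator

variable {i : V →ₗ[ℝ] H} {L : V →ₗ[ℝ] V} {S : ℕ → Submodule ℝ V} {lam : ℕ → ℝ}

theorem energy_add (h : IsTriangularOperator i L S lam) {n : ℕ} {p r : V} (hp : p ∈ S n)
    (hr : r ∈ S (n + 1)) (horth : ∀ q ∈ S n, ⟪i q, i r⟫_ℝ = 0) :
    ⟪i (L (p + r)), i (p + r)⟫_ℝ = ⟪i (L p), i p⟫_ℝ + lam (n + 1) * ‖i r‖ ^ 2 := by
  have hpr : ⟪i (L p), i r⟫_ℝ = 0 := horth _ (h.map_mem n p hp)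
  have hrp : ⟪i (L r), i p⟫_ℝ = 0 := (h.symm r p).trans hpr
  have hrr : ⟪i (L r), i r⟫_ℝ = lam (n + 1) * ‖i r‖ ^ 2 := by
    have hsub := horth _ (h.sub_smul_mem n r hr)
    rwa [map_sub, map_smul, inner_sub_left, real_inner_smul_left, real_inner_self_eq_norm_sq,
      sub_eq_zero] at hsub
  simp only [map_add, inner_add_left, inner_add_right, hpr, hrp, hrr]
  ring

theorem exists_mul_norm_sub_sq_le_energy (h : IsTriangularOperator i L S lam)
    [∀ n, FiniteDimensional ℝ ((S n).map i)] (hlam : Monotone lam) (n k : ℕ) :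
    ∀ p ∈ S (n + k), ∃ s ∈ S n, lam (n + 1) * ‖i p - i s‖ ^ 2 ≤ ⟪i (L p), i p⟫_ℝ := by
  induction k with
  | zero => exact fun p hp => ⟨p, hp, by simpa using h.nonneg p⟩
  | succ k ih =>
    intro p hp
    obtain ⟨p', hp', hproj⟩ := ((S (n + k)).map i).starProjection_apply_mem (i p)
    obtain ⟨s, hs, hle⟩ := ih p' hp'
    have horth : ∀ q ∈ S (n + k), ⟪i q, i (p - p')⟫_ℝ = 0 := fun q hq => by
      rw [real_inner_comm, map_sub, hproj]
      exact Submodule.starProjection_inner_eq_zero _ _ (Submodule.mem_map_of_mem hq)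
    have hr : p - p' ∈ S (n + k + 1) :=
      Submodule.sub_mem _ hp (h.monotone_filtration (Nat.le_succ _) hp')
    have hps : p' - s ∈ S (n + k) :=
      Submodule.sub_mem _ hp' (h.monotone_filtration (Nat.le_add_right _ _) hs)
    have hpyth : ‖i p - i s‖ ^ 2 = ‖i p' - i s‖ ^ 2 + ‖i (p - p')‖ ^ 2 := by
      have hadd : i p - i s = i (p' - s) + i (p - p') := by simp only [map_sub]; abel
      rw [hadd, norm_add_sq_real, horth _ hps, map_sub i p' s]
      ring
    refine ⟨s, hs, ?_⟩
    calc lam (n + 1) * ‖i p - i s‖ ^ 2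
        = lam (n + 1) * ‖i p' - i s‖ ^ 2 + lam (n + 1) * ‖i (p - p')‖ ^ 2 := by
          rw [hpyth, mul_add]
      _ ≤ ⟪i (L p'), i p'⟫_ℝ + lam (n + k + 1) * ‖i (p - p')‖ ^ 2 := by
          gcongr
          exact hlam (by omega)
      _ = ⟪i (L p), i p⟫_ℝ := by rw [← h.energy_add hp' hr horth, add_sub_cancel]

theorem mul_norm_sub_starProjection_sq_le_energy (h : IsTriangularOperator i L S lam)
    [∀ n, FiniteDimensional ℝ ((S n).map i)] (hlam : Monotone lam) (hS : ∀ p, ∃ n, p ∈ S n)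
    {n : ℕ} (hn : 0 ≤ lam (n + 1)) (p : V) :
    lam (n + 1) * ‖i p - ((S n).map i).starProjection (i p)‖ ^ 2 ≤ ⟪i (L p), i p⟫_ℝ := by
  obtain ⟨k, hk⟩ := hS p
  obtain ⟨s, hs, hle⟩ := h.exists_mul_norm_sub_sq_le_energy hlam n k p
    (h.monotone_filtration (Nat.le_add_left k n) hk)
  have hmin : ‖i p - ((S n).map i).starProjection (i p)‖ ≤ ‖i p - i s‖ := by
    rw [Submodule.starProjection_minimal]
    exact ciInf_le ⟨0, by rintro _ ⟨z, rfl⟩; exact norm_nonneg _⟩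
      (⟨i s, Submodule.mem_map_of_mem hs⟩ : (S n).map i)
  exact le_trans (by gcongr) hle

theorem isCompactOperator [CompleteSpace H] (h : IsTriangularOperator i L S lam)
    [∀ n, FiniteDimensional ℝ ((S n).map i)] (hlam : Monotone lam)
    (hlam_top : Tendsto lam atTop atTop) (hS : ∀ p, ∃ n, p ∈ S n)
    {W : Type*} [NormedAddCommGroup W] [NormedSpace ℝ W] {T : W →L[ℝ] H} {j : V → W}
    (hj : DenseRange j) (hTj : ∀ p, T (j p) = i p)
    (henergy : ∀ p, ⟪i (L p), i p⟫_ℝ ≤ ‖j p‖ ^ 2) : IsCompactOperator T := by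
  have hlam_succ : Tendsto (fun n => lam (n + 1)) atTop atTop :=
    hlam_top.comp (tendsto_add_atTop_nat 1)
  have hc : Tendsto (fun n => (√(lam (n + 1)))⁻¹) atTop (𝓝 0) :=
    (Real.tendsto_sqrt_atTop.comp hlam_succ).inv_tendsto_atTop
  refine isCompactOperator_of_norm_sub_starProjection_le (fun n => (S n).map i) hc ?_
  filter_upwards [hlam_succ.eventually_gt_atTop 0] with n hn w
  refine hj.induction_on (p := fun w => ‖T w - ((S n).map i).starProjection (T w)‖ ≤
    (√(lam (n + 1)))⁻¹ * ‖w‖) w (isClosed_le (by fun_prop) (by fun_prop)) fun p => ?_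
  have hle := (h.mul_norm_sub_starProjection_sq_le_energy hlam hS hn.le p).trans (henergy p)
  rw [hTj, inv_mul_eq_div, le_div_iff₀' (Real.sqrt_pos.2 hn)]
  refine le_of_sq_le_sq ?_ (norm_nonneg _)
  rwa [mul_pow, Real.sq_sqrt hn.le]

end IsTriangularOperator

end TriangularOperator

/-! ### Polynomials in two variables -/

section Polynomial

open MvPolynomial

@[simp] theorem pev_zero (x : ℝ × ℝ) : pev 0 x = 0 := by simp [pev]

@[simp] theorem pev_one (x : ℝ × ℝ) : pev 1 x = 1 := by simp [pev]

@[simp] theorem pev_C (c : ℝ) (x : ℝ × ℝ) : pev (C c) x = c := by simp [pev]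

@[simp] theorem pev_X_zero (x : ℝ × ℝ) : pev (X 0) x = x.1 := by simp [pev]

@[simp] theorem pev_X_one (x : ℝ × ℝ) : pev (X 1) x = x.2 := by simp [pev]

@[simp] theorem pev_neg (p : Poly2) (x : ℝ × ℝ) : pev (-p) x = -pev p x := by simp [pev]

@[simp] theorem pev_add (p q : Poly2) (x : ℝ × ℝ) : pev (p + q) x = pev p x + pev q x := by
  simp [pev]

@[simp] theorem pev_sub (p q : Poly2) (x : ℝ × ℝ) : pev (p - q) x = pev p x - pev q x := by
  simp [pev]

@[simp] theorem pev_mul (p q : Poly2) (x : ℝ × ℝ) : pev (p * q) x = pev p x * pev q x := by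
  simp [pev]

@[simp] theorem pev_smul (c : ℝ) (p : Poly2) (x : ℝ × ℝ) : pev (c • p) x = c * pev p x := by
  simp [pev]

theorem hasFDerivAt_pev (p : Poly2) (x : ℝ × ℝ) :
    HasFDerivAt (pev p) (pev (pderiv 0 p) x • ContinuousLinearMap.fst ℝ ℝ ℝ +
      pev (pderiv 1 p) x • ContinuousLinearMap.snd ℝ ℝ ℝ) x := by
  induction p using MvPolynomial.induction_on with
  | C a => simpa [funext (pev_C a)] using hasFDerivAt_const (𝕜 := ℝ) a x
  | add p q hp hq =>
    have hfun : pev (p + q) = pev p + pev q := funext (pev_add p q)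
    rw [hfun]
    refine (hp.add hq).congr_fderiv ?_
    ext <;> simp
  | mul_X p i hp =>
    have hfun : pev (p * X i) = pev p * pev (X i) := funext (pev_mul p (X i))
    rw [hfun]
    fin_cases i
    · have hX : HasFDerivAt (pev (X 0)) (ContinuousLinearMap.fst ℝ ℝ ℝ) x :=
        (funext pev_X_zero : pev (X 0) = Prod.fst) ▸ hasFDerivAt_fst
      refine (hp.mul hX).congr_fderiv ?_
      ext <;> simp [pderiv_X]
    · have hX : HasFDerivAt (pev (X 1)) (ContinuousLinearMap.snd ℝ ℝ ℝ) x :=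
        (funext pev_X_one : pev (X 1) = Prod.snd) ▸ hasFDerivAt_snd
      refine (hp.mul hX).congr_fderiv ?_
      ext <;> simp [pderiv_X]

theorem fderiv_mul_pev {ρ : ℝ × ℝ → ℝ} {ρ' : ℝ × ℝ →L[ℝ] ℝ} {x : ℝ × ℝ} (hρ : HasFDerivAt ρ ρ' x)
    (p : Poly2) : fderiv ℝ (fun y => ρ y * pev p y) x = ρ x •
      (pev (pderiv 0 p) x • ContinuousLinearMap.fst ℝ ℝ ℝ +
        pev (pderiv 1 p) x • ContinuousLinearMap.snd ℝ ℝ ℝ) + pev p x • ρ' :=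
  (hρ.mul (hasFDerivAt_pev p x)).fderiv

@[fun_prop]
theorem continuous_pev (p : Poly2) : Continuous (pev p) :=
  continuous_iff_continuousAt.2 fun x => (hasFDerivAt_pev p x).continuousAt

@[fun_prop]
theorem continuous_polyGrad (p : Poly2) : Continuous (polyGrad p) :=
  (continuous_pev _).prodMk (continuous_pev _)

theorem eq_zero_of_forall_pev_eq_zero {U : Set (ℝ × ℝ)} (hU : IsOpen U) (hne : U.Nonempty)
    {p : Poly2} (hp : ∀ x ∈ U, pev p x = 0) : p = 0 := by
  obtain ⟨x, hx⟩ := hne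
  obtain ⟨ε, hε, hball⟩ := Metric.isOpen_iff.1 hU x hx
  refine MvPolynomial.funext_set (fun i => Metric.ball (![x.1, x.2] i) ε) (fun i => ?_)
    fun y hy => ?_
  · rw [Real.ball_eq_Ioo]
    exact Set.Ioo_infinite (by linarith)
  · have hmem : (y 0, y 1) ∈ Metric.ball x ε :=
      ball_prod_same x.1 x.2 ε ▸ ⟨hy 0 trivial, hy 1 trivial⟩
    have hvec : ![y 0, y 1] = y := by ext i; fin_cases i <;> rfl
    simpa [pev, hvec] using hp _ (hball hmem)

theorem exists_pev_near_of_isCompact {K : Set (ℝ × ℝ)} (hK : IsCompact K) (f : C(ℝ × ℝ, ℝ))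
    {ε : ℝ} (hε : 0 < ε) : ∃ p : Poly2, ∀ x ∈ K, ‖pev p x - f x‖ < ε := by
  let A : Poly2 →ₐ[ℝ] C(ℝ × ℝ, ℝ) := aeval ![.fst, .snd]
  have hA (p : Poly2) (x : ℝ × ℝ) : A p x = pev p x := by
    induction p using MvPolynomial.induction_on with
    | C a => simp [A]
    | add p q hp hq => simp [hp, hq]
    | mul_X p i hp =>
      rw [map_mul, ContinuousMap.mul_apply, hp, pev_mul]
      fin_cases i <;> simp [A]
  have hsep : A.range.SeparatesPoints := by
    intro x y hxy
    rcases not_and_or.1 (mt Prod.ext_iff.2 hxy) with h | h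
    · exact ⟨_, ⟨A (X 0), ⟨_, rfl⟩, rfl⟩, by simpa only [hA, pev_X_zero] using h⟩
    · exact ⟨_, ⟨A (X 1), ⟨_, rfl⟩, rfl⟩, by simpa only [hA, pev_X_one] using h⟩
  obtain ⟨_, ⟨p, rfl⟩, hp⟩ :=
    ContinuousMap.exists_mem_subalgebra_near_continuous_of_isCompact_of_separatesPoints hsep f hK hε
  exact ⟨p, fun x hx => hA p x ▸ hp x hx⟩

theorem denseRange_of_ae_eq_pev {μ : Measure (ℝ × ℝ)} [IsFiniteMeasure μ] {K : Set (ℝ × ℝ)}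
    (hK : IsCompact K) (hμ : ∀ᵐ x ∂μ, x ∈ K) {r : ENNReal} [Fact (1 ≤ r)] (hr : r ≠ ⊤)
    {i : Poly2 → Lp ℝ r μ} (hi : ∀ p, i p =ᵐ[μ] pev p) : DenseRange i := by
  refine Metric.denseRange_iff.2 fun f ε hε => ?_
  obtain ⟨b, hb⟩ := Metric.denseRange_iff.1
    (BoundedContinuousFunction.toLp_denseRange (p := r) ℝ μ ℝ hr) f (ε / 2) (half_pos hε)
  set M : ℝ := measureUnivNNReal μ ^ r.toReal⁻¹ with hM
  have hδ : 0 < ε / (2 * (M + 1)) := by positivity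
  obtain ⟨p, hp⟩ := exists_pev_near_of_isCompact hK b.toContinuousMap hδ
  have hdist : dist (BoundedContinuousFunction.toLp r μ ℝ b) (i p) ≤ M * (ε / (2 * (M + 1))) := by
    rw [dist_comm, dist_eq_norm, hM]
    refine Lp.norm_le_of_ae_bound hδ.le ?_
    filter_upwards [Lp.coeFn_sub (i p) (BoundedContinuousFunction.toLp r μ ℝ b),
      BoundedContinuousFunction.coeFn_toLp (p := r) (𝕜 := ℝ) μ b, hi p, hμ] with x hsub hbx hpx hx
    rw [hsub, Pi.sub_apply, hbx, hpx]
    exact (hp x hx).le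
  have hhalf : M * (ε / (2 * (M + 1))) ≤ ε / 2 := by
    rw [mul_div_assoc', div_le_div_iff₀ (by positivity) two_pos]
    nlinarith
  exact ⟨p, by linarith [dist_triangle f (BoundedContinuousFunction.toLp r μ ℝ b) (i p)]⟩

theorem monotone_restrictTotalDegree {σ R : Type*} [CommSemiring R] :
    Monotone (restrictTotalDegree σ R) := fun m n hmn p hp =>
  (mem_restrictTotalDegree σ n p).2 (((mem_restrictTotalDegree σ m p).1 hp).trans hmn)

theorem not_finiteDimensional_of_injective_poly2 {E : Type*} [AddCommGroup E] [Module ℝ E]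
    {i : Poly2 →ₗ[ℝ] E} (hi : Function.Injective i) : ¬ FiniteDimensional ℝ E := fun _ => by
  have : Module.Finite ℝ Poly2 := Module.Finite.of_injective i hi
  have := Module.Finite.finite_basis (basisMonomials (Fin 2) ℝ)
  exact not_finite (Fin 2 →₀ ℕ)

end Polynomial

/-- A weight `ρ` on `Ω` and a symmetric polynomial matrix `Φ` with entries `p11, p12, p22`,
related by the Pearson equation `div(ρΦ) = ρ(ψ1, ψ2)` with polynomial `ψ1, ψ2`. -/
structure PearsonWeight where
  Ω : Set (ℝ × ℝ)
  ρ : ℝ × ℝ → ℝ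
  p11 : Poly2
  p12 : Poly2
  p22 : Poly2
  ψ1 : Poly2
  ψ2 : Poly2
  differentiableAt : ∀ x ∈ Ω, DifferentiableAt ℝ ρ x
  pearson_fst : ∀ x ∈ Ω, fderiv ℝ (fun y => ρ y * pev p11 y) x (1, 0) +
    fderiv ℝ (fun y => ρ y * pev p12 y) x (0, 1) = ρ x * pev ψ1 x
  pearson_snd : ∀ x ∈ Ω, fderiv ℝ (fun y => ρ y * pev p12 y) x (1, 0) +
    fderiv ℝ (fun y => ρ y * pev p22 y) x (0, 1) = ρ x * pev ψ2 x

namespace PearsonWeight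

open MvPolynomial

variable (P : PearsonWeight)

/-- The polynomial `ρ⁻¹ div(ρΦv)` for a polynomial vector field `v = (v1, v2)`. -/
def divPoly (v1 v2 : Poly2) : Poly2 :=
  P.ψ1 * v1 + P.ψ2 * v2 + (P.p11 * pderiv 0 v1 + P.p12 * pderiv 0 v2) +
    (P.p12 * pderiv 1 v1 + P.p22 * pderiv 1 v2)

/-- The operator `u ↦ -ρ⁻¹ div(ρΦ∇u)` on polynomials. -/
def op : Poly2 →ₗ[ℝ] Poly2 where
  toFun u := -P.divPoly (pderiv 0 u) (pderiv 1 u)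
  map_add' u w := by simp only [divPoly, map_add]; ring
  map_smul' c u := by
    simp only [divPoly, Derivation.map_smul, RingHom.id_apply, mul_smul_comm, smul_neg, smul_add]

theorem op_apply (u : Poly2) : P.op u = -P.divPoly (pderiv 0 u) (pderiv 1 u) := rfl

theorem divRhoPhi_eq (v1 v2 : Poly2) {x : ℝ × ℝ} (hx : x ∈ P.Ω) :
    divRhoPhi P.ρ P.p11 P.p12 P.p12 P.p22 v1 v2 x = P.ρ x * pev (P.divPoly v1 v2) x := by
  have hmul := fderiv_mul_pev (P.differentiableAt x hx).hasFDerivAt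
  have hfst := P.pearson_fst x hx
  have hsnd := P.pearson_snd x hx
  have hlin (p q : Poly2) : (fun y => P.ρ y * (pev p y * pev v1 y + pev q y * pev v2 y)) =
      fun y => P.ρ y * pev (p * v1 + q * v2) y := by simp
  simp only [divRhoPhi, hlin, hmul, divPoly] at hfst hsnd ⊢
  simp only [map_add, Derivation.leibniz, pev_add, pev_mul, add_apply, smul_apply, smul_eq_mul,
    ContinuousLinearMap.coe_fst', ContinuousLinearMap.coe_snd'] at hfst hsnd ⊢
  linear_combination pev v1 x * hfst + pev v2 x * hsnd

theorem pev_divPoly_mul (q v1 v2 : Poly2) (x : ℝ × ℝ) :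
    pev (P.divPoly (q * v1) (q * v2)) x = pev q x * pev (P.divPoly v1 v2) x +
      bilPhi P.p11 P.p12 P.p12 P.p22 x (polyGrad q x) (pev v1 x, pev v2 x) := by
  simp only [divPoly, bilPhi, polyGrad, Derivation.leibniz, smul_eq_mul, pev_add, pev_mul]
  ring

end PearsonWeight

section WeightMeasure

variable {Ω : Set (ℝ × ℝ)} {ρ : ℝ × ℝ → ℝ}

/-- The measure `ρ dx` on `Ω`, so that `L²(Ω, ρ)` is `Lp ℝ 2 (weightMeasure Ω ρ)`. -/
def weightMeasure (Ω : Set (ℝ × ℝ)) (ρ : ℝ × ℝ → ℝ) : Measure (ℝ × ℝ) :=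
  (volume.restrict Ω).withDensity fun x => ENNReal.ofReal (ρ x)

theorem ae_weightMeasure_of_ae {p : ℝ × ℝ → Prop} (h : ∀ᵐ x ∂volume.restrict Ω, p x) :
    ∀ᵐ x ∂weightMeasure Ω ρ, p x :=
  (withDensity_absolutelyContinuous _ _).ae_le h

namespace IsWeight

theorem ae_of_ae_weightMeasure (hρ : IsWeight Ω ρ) {p : ℝ × ℝ → Prop}
    (h : ∀ᵐ x ∂weightMeasure Ω ρ, p x) : ∀ᵐ x ∂volume.restrict Ω, p x := by
  rw [weightMeasure, ae_withDensity_iff hρ.1.ennreal_ofReal] at h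
  filter_upwards [h, hρ.2.1] with x hx hpos
  exact hx (by simpa using hpos)

theorem integral_weightMeasure (hρ : IsWeight Ω ρ) (f : ℝ × ℝ → ℝ) :
    ∫ x, f x ∂weightMeasure Ω ρ = ∫ x in Ω, ρ x * f x := by
  rw [weightMeasure, integral_withDensity_eq_integral_toReal_smul hρ.1.ennreal_ofReal
    (Eventually.of_forall fun _ => ENNReal.ofReal_lt_top)]
  refine integral_congr_ae ?_
  filter_upwards [hρ.2.1] with x hx
  rw [ENNReal.toReal_ofReal hx.le, smul_eq_mul]

theorem integrable_weightMeasure_iff (hρ : IsWeight Ω ρ) {f : ℝ × ℝ → ℝ} :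
    Integrable f (weightMeasure Ω ρ) ↔ IntegrableOn (fun x => ρ x * f x) Ω := by
  rw [weightMeasure, integrable_withDensity_iff_integrable_smul' hρ.1.ennreal_ofReal
    (Eventually.of_forall fun _ => ENNReal.ofReal_lt_top)]
  refine integrable_congr ?_
  filter_upwards [hρ.2.1] with x hx
  rw [ENNReal.toReal_ofReal hx.le, smul_eq_mul]

theorem isFiniteMeasure_weightMeasure (hρ : IsWeight Ω ρ) : IsFiniteMeasure (weightMeasure Ω ρ) :=
  isFiniteMeasure_withDensity_ofReal hρ.2.2.2

theorem memL2_iff_memLp (hρ : IsWeight Ω ρ) {f : ℝ × ℝ → ℝ} (hf : Measurable f) :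
    MemL2 Ω ρ f ↔ MemLp f 2 (weightMeasure Ω ρ) := by
  simp only [memLp_two_iff_integrable_sq hf.aestronglyMeasurable,
    hρ.integrable_weightMeasure_iff, MemL2, hf, true_and, mul_comm]

end IsWeight

theorem memLp_of_continuous_of_isBounded {X E : Type*} [PseudoMetricSpace X] [ProperSpace X]
    [MeasurableSpace X] [OpensMeasurableSpace X] [NormedAddCommGroup E]
    [SecondCountableTopologyEither X E] {μ : Measure X} [IsFiniteMeasure μ] {s : Set X}
    (hs : Bornology.IsBounded s) (hμ : ∀ᵐ x ∂μ, x ∈ s) {f : X → E} (hf : Continuous f)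
    (r : ENNReal) : MemLp f r μ := by
  obtain ⟨C, hC⟩ := hs.isCompact_closure.exists_bound_of_continuousOn hf.continuousOn
  exact .of_bound hf.aestronglyMeasurable C (hμ.mono fun x hx => hC x (subset_closure hx))

theorem inner_eq_integral_mul_of_ae_eq {X : Type*} [MeasurableSpace X] {μ : Measure X}
    {f f' : Lp ℝ 2 μ} {u v : X → ℝ} (hf : f =ᵐ[μ] u) (hf' : f' =ᵐ[μ] v) :
    ⟪f, f'⟫_ℝ = ∫ x, u x * v x ∂μ := by
  rw [L2.inner_def]
  refine integral_congr_ae ?_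
  filter_upwards [hf, hf'] with x hfx hfx'
  rw [hfx, hfx', RCLike.inner_apply, conj_trivial, mul_comm]

end WeightMeasure

theorem bilPhi_comm (p q r : Poly2) (x g h : ℝ × ℝ) :
    bilPhi p q q r x g h = bilPhi p q q r x h g := by
  simp only [bilPhi]; ring

theorem continuous_bilPhi {p q r s : Poly2} {g h : ℝ × ℝ → ℝ × ℝ} (hg : Continuous g)
    (hh : Continuous h) : Continuous fun x => bilPhi p q r s x (g x) (h x) := by
  unfold bilPhi; fun_prop

theorem polyGrad_add (p q : Poly2) (x : ℝ × ℝ) :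
    polyGrad (p + q) x = polyGrad p x + polyGrad q x := by
  simp [polyGrad]

theorem polyGrad_smul (c : ℝ) (p : Poly2) (x : ℝ × ℝ) :
    polyGrad (c • p) x = c • polyGrad p x := by
  simp [polyGrad, Derivation.map_smul]

/-! ### The weak eigenvalue problem -/

/-- The weak eigenvalue problem `-div(ρΦ∇u) + Vρu = νρu` on a bounded open set `Ω`, with `Φ`
positive definite on `Ω`, `ρΦ` vanishing at the boundary in the sense that every `div(ρΦv)` with
`v` polynomial has integral zero, and `V` bounded between positive constants. -/
structure HelmholtzProblem extends PearsonWeight where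
  V : ℝ × ℝ → ℝ
  Vmin : ℝ
  Vmax : ℝ
  isOpen_Ω : IsOpen Ω
  nonempty_Ω : Ω.Nonempty
  isBounded_Ω : Bornology.IsBounded Ω
  isWeight : IsWeight Ω ρ
  symPosDef : SymPosDef Ω p11 p12 p12 p22
  integral_mul_divPoly : ∀ v1 v2, ∫ x in Ω, ρ x * pev (toPearsonWeight.divPoly v1 v2) x = 0
  measurable_V : Measurable V
  Vmin_pos : 0 < Vmin
  Vmin_le : ∀ x ∈ Ω, Vmin ≤ V x
  le_Vmax : ∀ x ∈ Ω, V x ≤ Vmax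

namespace HelmholtzProblem

open MvPolynomial

variable (P : HelmholtzProblem)

/-- The measure `ρ dx` on `Ω`. -/
abbrev μ : Measure (ℝ × ℝ) := weightMeasure P.Ω P.ρ

/-- The bilinear form `(g, h) ↦ gᵗ Φ(x) h`. -/
abbrev form (x g h : ℝ × ℝ) : ℝ := bilPhi P.p11 P.p12 P.p12 P.p22 x g h

instance : IsFiniteMeasure P.μ := P.isWeight.isFiniteMeasure_weightMeasure

theorem ae_mem : ∀ᵐ x ∂P.μ, x ∈ P.Ω :=
  ae_weightMeasure_of_ae (ae_restrict_mem P.isOpen_Ω.measurableSet)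

theorem memLp_of_continuous {f : ℝ × ℝ → ℝ} (hf : Continuous f) (r : ENNReal) : MemLp f r P.μ :=
  memLp_of_continuous_of_isBounded P.isBounded_Ω P.ae_mem hf r

theorem integrable_of_continuous {f : ℝ × ℝ → ℝ} (hf : Continuous f) : Integrable f P.μ :=
  memLp_one_iff_integrable.1 (P.memLp_of_continuous hf 1)

section EnergyVector

variable {P} {x : ℝ × ℝ}

theorem V_pos (hx : x ∈ P.Ω) : 0 < P.V x := P.Vmin_pos.trans_le (P.Vmin_le x hx)

theorem form_self_nonneg (hx : x ∈ P.Ω) (g : ℝ × ℝ) : 0 ≤ P.form x g g := by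
  rcases eq_or_ne g 0 with rfl | hg
  · simp [bilPhi]
  · exact (P.symPosDef.2 x hx g hg).le

variable (P) in
/-- The Schur complement `Φ₂₂ - Φ₁₂² / Φ₁₁`, the last pivot of the Cholesky decomposition of `Φ`. -/
def pivot (x : ℝ × ℝ) : ℝ := pev P.p22 x - pev P.p12 x ^ 2 / pev P.p11 x

theorem pev_p11_pos (hx : x ∈ P.Ω) : 0 < pev P.p11 x := by
  simpa [bilPhi] using P.symPosDef.2 x hx (1, 0) (by simp)

theorem pivot_pos (hx : x ∈ P.Ω) : 0 < P.pivot x := by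
  have hp := pev_p11_pos hx
  have h := P.symPosDef.2 x hx (-pev P.p12 x / pev P.p11 x, 1) (by simp)
  have hform : bilPhi P.p11 P.p12 P.p12 P.p22 x (-pev P.p12 x / pev P.p11 x, 1)
      (-pev P.p12 x / pev P.p11 x, 1) = P.pivot x := by
    simp only [bilPhi, pivot]; field_simp; ring
  rwa [hform] at h

variable (P) in
/-- The vector with squared length `V(x) u² + gᵗ Φ(x) g` obtained from the Cholesky decomposition
of `Φ(x)`. It realises the energy space inside the `L²` space of `ℝ³`-valued functions. -/
def energyVec (x : ℝ × ℝ) (u : ℝ) (g : ℝ × ℝ) : EuclideanSpace ℝ (Fin 3) :=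
  !₂[√(P.V x) * u, √(pev P.p11 x) * (g.1 + pev P.p12 x / pev P.p11 x * g.2), √(P.pivot x) * g.2]

variable (P) in
/-- The function component `u` of `energyVec x u g`. -/
def valueOf (x : ℝ × ℝ) (e : EuclideanSpace ℝ (Fin 3)) : ℝ := e 0 / √(P.V x)

variable (P) in
/-- The gradient component `g` of `energyVec x u g`. -/
def gradOf (x : ℝ × ℝ) (e : EuclideanSpace ℝ (Fin 3)) : ℝ × ℝ :=
  (e 1 / √(pev P.p11 x) - pev P.p12 x / pev P.p11 x * (e 2 / √(P.pivot x)), e 2 / √(P.pivot x))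

theorem energyVec_valueOf_gradOf (hx : x ∈ P.Ω) (e : EuclideanSpace ℝ (Fin 3)) :
    P.energyVec x (P.valueOf x e) (P.gradOf x e) = e := by
  have hV := (Real.sqrt_pos.2 (V_pos hx)).ne'
  have hp := (Real.sqrt_pos.2 (pev_p11_pos hx)).ne'
  have hd := (Real.sqrt_pos.2 (pivot_pos hx)).ne'
  ext i
  fin_cases i <;> simp [energyVec, valueOf, gradOf, mul_div_cancel₀, *]

theorem valueOf_energyVec (hx : x ∈ P.Ω) (u : ℝ) (g : ℝ × ℝ) :
    P.valueOf x (P.energyVec x u g) = u := by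
  have hV := (Real.sqrt_pos.2 (V_pos hx)).ne'
  simp [energyVec, valueOf, hV]

theorem inner_energyVec (hx : x ∈ P.Ω) (u v : ℝ) (g h : ℝ × ℝ) :
    ⟪P.energyVec x u g, P.energyVec x v h⟫_ℝ = P.V x * (u * v) + P.form x g h := by
  have hp := pev_p11_pos hx
  have hsum : ⟪P.energyVec x u g, P.energyVec x v h⟫_ℝ = √(P.V x) * √(P.V x) * (u * v) +
      √(pev P.p11 x) * √(pev P.p11 x) * ((g.1 + pev P.p12 x / pev P.p11 x * g.2) *
        (h.1 + pev P.p12 x / pev P.p11 x * h.2)) +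
      √(P.pivot x) * √(P.pivot x) * (g.2 * h.2) := by
    simp only [PiLp.inner_apply, Fin.sum_univ_three, energyVec, RCLike.inner_apply, conj_trivial,
      Matrix.cons_val]
    ring
  rw [hsum, Real.mul_self_sqrt (V_pos hx).le, Real.mul_self_sqrt hp.le,
    Real.mul_self_sqrt (pivot_pos hx).le, pivot, form, bilPhi]
  field_simp
  ring

theorem norm_energyVec_sq (hx : x ∈ P.Ω) (u : ℝ) (g : ℝ × ℝ) :
    ‖P.energyVec x u g‖ ^ 2 = P.V x * u ^ 2 + P.form x g g := by
  rw [← real_inner_self_eq_norm_sq, inner_energyVec hx, sq]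

theorem norm_valueOf_le (hx : x ∈ P.Ω) (e : EuclideanSpace ℝ (Fin 3)) :
    ‖P.valueOf x e‖ ≤ (√P.Vmin)⁻¹ * ‖e‖ := by
  have hV : (√(P.V x))⁻¹ ≤ (√P.Vmin)⁻¹ :=
    inv_anti₀ (Real.sqrt_pos.2 P.Vmin_pos) (Real.sqrt_le_sqrt (P.Vmin_le x hx))
  rw [valueOf, div_eq_inv_mul, norm_mul, Real.norm_of_nonneg (by positivity)]
  exact mul_le_mul hV (PiLp.norm_apply_le e 0) (norm_nonneg _) (by positivity)

theorem energyVec_add (x : ℝ × ℝ) (u v : ℝ) (g h : ℝ × ℝ) :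
    P.energyVec x (u + v) (g + h) = P.energyVec x u g + P.energyVec x v h := by
  ext i
  fin_cases i <;> simp [energyVec] <;> ring

theorem energyVec_smul (x : ℝ × ℝ) (c u : ℝ) (g : ℝ × ℝ) :
    P.energyVec x (c * u) (c • g) = c • P.energyVec x u g := by
  ext i
  fin_cases i <;> simp [energyVec] <;> ring

theorem energyVec_sub (x : ℝ × ℝ) (u v : ℝ) (g h : ℝ × ℝ) :
    P.energyVec x (u - v) (g - h) = P.energyVec x u g - P.energyVec x v h := by
  ext i
  fin_cases i <;> simp [energyVec] <;> ring

variable (P) in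
theorem measurable_pivot : Measurable P.pivot := by
  unfold pivot; fun_prop

theorem measurable_energyVec {u : ℝ × ℝ → ℝ} {g : ℝ × ℝ → ℝ × ℝ} (hu : Measurable u)
    (hg : Measurable g) : Measurable fun x => P.energyVec x (u x) (g x) := by
  have hV := P.measurable_V
  have hd := P.measurable_pivot
  refine (WithLp.measurable_toLp 2 _).comp (measurable_pi_iff.2 fun i => ?_)
  fin_cases i <;>
    simp only [Fin.zero_eta, Fin.mk_one, Fin.reduceFinMk, Matrix.cons_val] <;> fun_prop

theorem measurable_valueOf {e : ℝ × ℝ → EuclideanSpace ℝ (Fin 3)} (he : Measurable e) :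
    Measurable fun x => P.valueOf x (e x) := by
  have hV := P.measurable_V
  unfold valueOf; fun_prop

theorem measurable_gradOf {e : ℝ × ℝ → EuclideanSpace ℝ (Fin 3)} (he : Measurable e) :
    Measurable fun x => P.gradOf x (e x) := by
  have hd := P.measurable_pivot
  unfold gradOf; fun_prop

end EnergyVector

section Lebesgue

variable {P : HelmholtzProblem} {u v : ℝ × ℝ → ℝ} {g h : ℝ × ℝ → ℝ × ℝ}

theorem integrable_V_mul (hu : Integrable u P.μ) : Integrable (fun x => P.V x * u x) P.μ := by
  refine hu.bdd_mul (c := P.Vmax) P.measurable_V.aestronglyMeasurable ?_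
  filter_upwards [P.ae_mem] with x hx
  rw [Real.norm_of_nonneg (V_pos hx).le]
  exact P.le_Vmax x hx

theorem memLp_energyVec (hu : Measurable u) (hg : Measurable g)
    (hu2 : Integrable (fun x => u x ^ 2) P.μ)
    (hg2 : Integrable (fun x => P.form x (g x) (g x)) P.μ) :
    MemLp (fun x => P.energyVec x (u x) (g x)) 2 P.μ := by
  rw [memLp_two_iff_integrable_sq_norm (measurable_energyVec hu hg).aestronglyMeasurable]
  refine ((integrable_V_mul hu2).add hg2).congr ?_
  filter_upwards [P.ae_mem] with x hx
  exact (norm_energyVec_sq hx _ _).symm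

theorem memLp_energyVec_of_continuous (hu : Continuous u) (hg : Continuous g) :
    MemLp (fun x => P.energyVec x (u x) (g x)) 2 P.μ :=
  memLp_energyVec hu.measurable hg.measurable (P.integrable_of_continuous (by fun_prop))
    (P.integrable_of_continuous (continuous_bilPhi hg hg))

variable (P)

/-- The polynomials as elements of `L²(Ω, ρ)`. -/
def polyL2 : Poly2 →ₗ[ℝ] Lp ℝ 2 P.μ where
  toFun p := (P.memLp_of_continuous (continuous_pev p) 2).toLp (pev p)
  map_add' p q := by
    rw [← MemLp.toLp_add]
    exact MemLp.toLp_congr _ _ (Eventually.of_forall fun x => pev_add p q x)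
  map_smul' c p := by
    rw [RingHom.id_apply, ← MemLp.toLp_const_smul]
    exact MemLp.toLp_congr _ _ (Eventually.of_forall fun x => pev_smul c p x)

theorem coeFn_polyL2 (p : Poly2) : P.polyL2 p =ᵐ[P.μ] pev p :=
  (P.memLp_of_continuous (continuous_pev p) 2).coeFn_toLp

/-- The space `L²(Ω, Vρ) × L²(Ω, ρΦ)`, trivialised by `energyVec`. -/
abbrev PairSpace := Lp (EuclideanSpace ℝ (Fin 3)) 2 P.μ

/-- The polynomials, paired with their gradients, as elements of `L²(Ω, Vρ) × L²(Ω, ρΦ)`. -/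
def polyPair : Poly2 →ₗ[ℝ] P.PairSpace where
  toFun p := (memLp_energyVec_of_continuous (continuous_pev p) (continuous_polyGrad p)).toLp _
  map_add' p q := by
    rw [← MemLp.toLp_add]
    refine MemLp.toLp_congr _ _ (Eventually.of_forall fun x => ?_)
    simp only [Pi.add_apply, pev_add, polyGrad_add, energyVec_add]
  map_smul' c p := by
    rw [RingHom.id_apply, ← MemLp.toLp_const_smul]
    refine MemLp.toLp_congr _ _ (Eventually.of_forall fun x => ?_)
    simp only [Pi.smul_apply, pev_smul, polyGrad_smul, energyVec_smul]

theorem coeFn_polyPair (p : Poly2) :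
    P.polyPair p =ᵐ[P.μ] fun x => P.energyVec x (pev p x) (polyGrad p x) :=
  (memLp_energyVec_of_continuous (continuous_pev p) (continuous_polyGrad p)).coeFn_toLp

variable {P}

/-- The function component of an element of `L²(Ω, Vρ) × L²(Ω, ρΦ)`. -/
def value (F : P.PairSpace) (x : ℝ × ℝ) : ℝ := P.valueOf x (F x)

/-- The vector field component of an element of `L²(Ω, Vρ) × L²(Ω, ρΦ)`. -/
def grad (F : P.PairSpace) (x : ℝ × ℝ) : ℝ × ℝ := P.gradOf x (F x)

theorem measurable_value (F : P.PairSpace) : Measurable (value F) :=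
  measurable_valueOf (Lp.stronglyMeasurable F).measurable

theorem measurable_grad (F : P.PairSpace) : Measurable (grad F) :=
  measurable_gradOf (Lp.stronglyMeasurable F).measurable

/-- `F` is the element of `L²(Ω, Vρ) × L²(Ω, ρΦ)` given by the function `u` and the vector
field `g`. -/
def IsPair (F : P.PairSpace) (u : ℝ × ℝ → ℝ) (g : ℝ × ℝ → ℝ × ℝ) : Prop :=
  F =ᵐ[P.μ] fun x => P.energyVec x (u x) (g x)

theorem isPair_value_grad (F : P.PairSpace) : IsPair F (value F) (grad F) :=
  P.ae_mem.mono fun x hx => (energyVec_valueOf_gradOf hx (F x)).symm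

theorem IsPair.sub {F G : P.PairSpace} (hF : IsPair F u g) (hG : IsPair G v h) :
    IsPair (F - G) (fun x => u x - v x) (fun x => g x - h x) := by
  filter_upwards [Lp.coeFn_sub F G, hF, hG] with x hsub hFx hGx
  rw [hsub, Pi.sub_apply, hFx, hGx, energyVec_sub]

theorem IsPair.value_ae_eq {F : P.PairSpace} (hF : IsPair F u g) : value F =ᵐ[P.μ] u := by
  filter_upwards [hF, P.ae_mem] with x hFx hx
  rw [value, hFx, valueOf_energyVec hx]

theorem memLp_value (F : P.PairSpace) : MemLp (value F) 2 P.μ :=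
  (Lp.memLp F).of_le_mul (measurable_value F).aestronglyMeasurable
    (P.ae_mem.mono fun _ hx => norm_valueOf_le hx _)

theorem IsPair.memLp {F : P.PairSpace} (hF : IsPair F u g) : MemLp u 2 P.μ :=
  (memLp_value F).ae_eq hF.value_ae_eq

variable (P) in
/-- The projection `L²(Ω, Vρ) × L²(Ω, ρΦ) → L²(Ω, ρ)`. -/
def valueL : P.PairSpace →L[ℝ] Lp ℝ 2 P.μ :=
  LinearMap.mkContinuous
    { toFun := fun F => (memLp_value F).toLp _
      map_add' := fun F G => by
        rw [← MemLp.toLp_add]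
        refine MemLp.toLp_congr _ _ ?_
        filter_upwards [Lp.coeFn_add F G] with x hx
        simp only [value, valueOf, hx, Pi.add_apply, PiLp.add_apply, add_div]
      map_smul' := fun c F => by
        rw [RingHom.id_apply, ← MemLp.toLp_const_smul]
        refine MemLp.toLp_congr _ _ ?_
        filter_upwards [Lp.coeFn_smul c F] with x hx
        simp only [value, valueOf, hx, Pi.smul_apply, PiLp.smul_apply, smul_eq_mul, mul_div_assoc] }
    (√P.Vmin)⁻¹ fun F => by
      refine Lp.norm_le_mul_norm_of_ae_le_mul ?_
      filter_upwards [(memLp_value F).coeFn_toLp, P.ae_mem] with x hFx hx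
      exact hFx ▸ norm_valueOf_le hx _

theorem IsPair.coeFn_valueL {F : P.PairSpace} (hF : IsPair F u g) : P.valueL F =ᵐ[P.μ] u :=
  (memLp_value F).coeFn_toLp.trans hF.value_ae_eq

theorem valueL_polyPair (p : Poly2) : P.valueL (P.polyPair p) = P.polyL2 p :=
  Lp.ext ((IsPair.coeFn_valueL (P.coeFn_polyPair p)).trans (P.coeFn_polyL2 p).symm)

theorem IsPair.inner_valueL {F G : P.PairSpace} (hF : IsPair F u g) (hG : IsPair G v h) :
    ⟪P.valueL F, P.valueL G⟫_ℝ = ∫ x in P.Ω, u x * v x * P.ρ x := by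
  rw [inner_eq_integral_mul_of_ae_eq hF.coeFn_valueL hG.coeFn_valueL,
    P.isWeight.integral_weightMeasure]
  simp only [mul_comm]

theorem IsPair.integrable_form {F G : P.PairSpace} (hF : IsPair F u g) (hG : IsPair G v h) :
    Integrable (fun x => P.form x (g x) (h x)) P.μ := by
  refine ((L2.integrable_inner (𝕜 := ℝ) F G).sub
    (integrable_V_mul (hF.memLp.integrable_mul hG.memLp))).congr ?_
  filter_upwards [hF, hG, P.ae_mem] with x hFx hGx hx
  rw [Pi.sub_apply, Pi.mul_apply, hFx, hGx, inner_energyVec hx, add_sub_cancel_left]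

theorem IsPair.inner_eq {F G : P.PairSpace} (hF : IsPair F u g) (hG : IsPair G v h) :
    ⟪F, G⟫_ℝ = ∫ x, P.V x * (u x * v x) ∂P.μ + ∫ x, P.form x (g x) (h x) ∂P.μ := by
  have hV : Integrable (fun x => P.V x * (u x * v x)) P.μ :=
    integrable_V_mul (hF.memLp.integrable_mul hG.memLp)
  rw [L2.inner_def, ← integral_add hV (hF.integrable_form hG)]
  refine integral_congr_ae ?_
  filter_upwards [hF, hG, P.ae_mem] with x hFx hGx hx
  rw [hFx, hGx, inner_energyVec hx]

theorem IsPair.norm_sq_eq {F : P.PairSpace} (hF : IsPair F u g) :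
    ‖F‖ ^ 2 = ∫ x, P.V x * u x ^ 2 ∂P.μ + ∫ x, P.form x (g x) (g x) ∂P.μ := by
  rw [← real_inner_self_eq_norm_sq, hF.inner_eq hF]
  simp only [sq]

theorem integral_form_self_nonneg (g : ℝ × ℝ → ℝ × ℝ) : 0 ≤ ∫ x, P.form x (g x) (g x) ∂P.μ :=
  integral_nonneg_of_ae (P.ae_mem.mono fun _ hx => form_self_nonneg hx _)

theorem IsPair.min_mul_le_norm_sq {F : P.PairSpace} (hF : IsPair F u g) :
    min P.Vmin 1 * (∫ x, u x ^ 2 ∂P.μ + ∫ x, P.form x (g x) (g x) ∂P.μ) ≤ ‖F‖ ^ 2 := by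
  have hu := hF.memLp.integrable_sq
  have hform := integral_form_self_nonneg (P := P) g
  have hV : P.Vmin * ∫ x, u x ^ 2 ∂P.μ ≤ ∫ x, P.V x * u x ^ 2 ∂P.μ := by
    rw [← integral_const_mul]
    refine integral_mono_ae (hu.const_mul _) (integrable_V_mul hu) ?_
    filter_upwards [P.ae_mem] with x hx
    exact mul_le_mul_of_nonneg_right (P.Vmin_le x hx) (sq_nonneg _)
  rw [hF.norm_sq_eq, mul_add]
  refine add_le_add (le_trans ?_ hV) (mul_le_of_le_one_left hform (min_le_right _ _))
  exact mul_le_mul_of_nonneg_right (min_le_left _ _) (integral_nonneg fun x => sq_nonneg _)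

theorem IsPair.norm_sq_le_max_mul {F : P.PairSpace} (hF : IsPair F u g) :
    ‖F‖ ^ 2 ≤ max P.Vmax 1 * (∫ x, u x ^ 2 ∂P.μ + ∫ x, P.form x (g x) (g x) ∂P.μ) := by
  have hu := hF.memLp.integrable_sq
  have hform := integral_form_self_nonneg (P := P) g
  have hV : ∫ x, P.V x * u x ^ 2 ∂P.μ ≤ P.Vmax * ∫ x, u x ^ 2 ∂P.μ := by
    rw [← integral_const_mul]
    refine integral_mono_ae (integrable_V_mul hu) (hu.const_mul _) ?_
    filter_upwards [P.ae_mem] with x hx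
    exact mul_le_mul_of_nonneg_right (P.le_Vmax x hx) (sq_nonneg _)
  rw [hF.norm_sq_eq, mul_add]
  refine add_le_add (hV.trans ?_) (le_mul_of_one_le_left hform (le_max_right _ _))
  exact mul_le_mul_of_nonneg_right (le_max_left _ _) (integral_nonneg fun x => sq_nonneg _)

end Lebesgue

section EnergySpace

variable (P : HelmholtzProblem)

/-- The space `W(Ω, ρ, ρΦ)`, with the inner product `∫ (∇v)ᵗ ρΦ ∇u + ∫ V u v ρ`, realised as the
closure of the polynomials (paired with their gradients). -/
def energySpace : Submodule ℝ P.PairSpace := P.polyPair.range.topologicalClosure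

instance : CompleteSpace P.energySpace :=
  P.polyPair.range.isClosed_topologicalClosure.completeSpace_coe

/-- The polynomials as elements of the energy space. -/
def polyEnergy (p : Poly2) : P.energySpace :=
  ⟨P.polyPair p, Submodule.le_topologicalClosure _ ⟨p, rfl⟩⟩

theorem denseRange_polyEnergy : DenseRange P.polyEnergy := by
  refine Subtype.dense_iff.2 fun F hF => ?_
  convert! hF
  rw [← Set.range_comp]
  rfl

/-- The embedding of `W(Ω, ρ, ρΦ)` into `L²(Ω, ρ)`. -/
def incl : P.energySpace →L[ℝ] Lp ℝ 2 P.μ := P.valueL.comp P.energySpace.subtypeL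

theorem incl_polyEnergy (p : Poly2) : P.incl (P.polyEnergy p) = P.polyL2 p := valueL_polyPair p

theorem denseRange_polyL2 : DenseRange P.polyL2 :=
  denseRange_of_ae_eq_pev P.isBounded_Ω.isCompact_closure
    (P.ae_mem.mono fun _ hx => subset_closure hx) ENNReal.ofNat_ne_top P.coeFn_polyL2

theorem denseRange_incl : DenseRange P.incl :=
  P.denseRange_polyL2.mono <| Set.range_subset_iff.2 fun p => ⟨_, P.incl_polyEnergy p⟩

theorem injective_polyL2 : Function.Injective P.polyL2 := by
  refine (injective_iff_map_eq_zero _).2 fun p hp => ?_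
  have hpev : pev p =ᵐ[P.μ] 0 := (P.coeFn_polyL2 p).symm.trans (hp ▸ Lp.coeFn_zero _ _ _)
  exact eq_zero_of_forall_pev_eq_zero P.isOpen_Ω P.nonempty_Ω
    (Measure.eqOn_open_of_ae_eq (P.isWeight.ae_of_ae_weightMeasure hpev) P.isOpen_Ω
      (continuous_pev p).continuousOn continuousOn_const)

theorem integral_pev_mul_divPoly_add (q v1 v2 : Poly2) :
    ∫ x, pev q x * pev (P.divPoly v1 v2) x ∂P.μ +
      ∫ x, P.form x (polyGrad q x) (pev v1 x, pev v2 x) ∂P.μ = 0 := by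
  rw [← integral_add (P.integrable_of_continuous (by fun_prop))
    (P.integrable_of_continuous (continuous_bilPhi (by fun_prop) (by fun_prop)))]
  simp only [← P.pev_divPoly_mul, P.isWeight.integral_weightMeasure, P.integral_mul_divPoly]

variable {P}

theorem integral_value_mul_divPoly_add {F : P.PairSpace} (hF : F ∈ P.energySpace) (v1 v2 : Poly2) :
    ∫ x, value F x * pev (P.divPoly v1 v2) x ∂P.μ +
      ∫ x, P.form x (grad F x) (pev v1 x, pev v2 x) ∂P.μ = 0 := by
  have hmem : MemLp (fun x => P.energyVec x 0 (pev v1 x, pev v2 x)) 2 P.μ :=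
    memLp_energyVec_of_continuous continuous_const (by fun_prop)
  set G : P.PairSpace := hmem.toLp _
  have hG : IsPair G (fun _ => 0) fun x => (pev v1 x, pev v2 x) := hmem.coeFn_toLp
  have hinner {F : P.PairSpace} {u g} (hF : IsPair F u g) :
      ⟪P.valueL F, P.polyL2 (P.divPoly v1 v2)⟫_ℝ + ⟪F, G⟫_ℝ =
        ∫ x, u x * pev (P.divPoly v1 v2) x ∂P.μ +
          ∫ x, P.form x (g x) (pev v1 x, pev v2 x) ∂P.μ := by
    simp [inner_eq_integral_mul_of_ae_eq hF.coeFn_valueL (P.coeFn_polyL2 _), hF.inner_eq hG]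
  rw [← hinner (isPair_value_grad F)]
  refine P.denseRange_polyEnergy.induction_on (p := fun F : P.energySpace =>
    ⟪P.valueL F, P.polyL2 (P.divPoly v1 v2)⟫_ℝ + ⟪(F : P.PairSpace), G⟫_ℝ = 0) ⟨F, hF⟩
    (isClosed_eq (by fun_prop) continuous_const) fun p => ?_
  exact (hinner (P.coeFn_polyPair p)).trans (P.integral_pev_mul_divPoly_add p v1 v2)

theorem mem_energySpace_iff {F : P.PairSpace} :
    F ∈ P.energySpace ↔ ∀ ε > 0, ∃ q, ‖F - P.polyPair q‖ < ε := by
  simp only [energySpace, ← SetLike.mem_coe, Submodule.topologicalClosure_coe,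
    Metric.mem_closure_iff, LinearMap.coe_range, Set.exists_range_iff, dist_eq_norm]

theorem IsPair.mem_energySpace_iff {F : P.PairSpace} {u : ℝ × ℝ → ℝ} {g : ℝ × ℝ → ℝ × ℝ}
    (hF : IsPair F u g) :
    F ∈ P.energySpace ↔ ∀ ε > 0, ∃ q : Poly2, (∫ x in P.Ω, (u x - pev q x) ^ 2 * P.ρ x) +
      (∫ x in P.Ω, P.ρ x * P.form x (g x - polyGrad q x) (g x - polyGrad q x)) < ε ^ 2 := by
  have hm : 0 < min P.Vmin 1 := lt_min P.Vmin_pos one_pos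
  have hM : 0 < max P.Vmax 1 := lt_max_of_lt_right one_pos
  have hsub (q : Poly2) := hF.sub (P.coeFn_polyPair q)
  simp only [mul_comm _ (P.ρ _), ← P.isWeight.integral_weightMeasure]
  rw [HelmholtzProblem.mem_energySpace_iff]
  refine ⟨fun h ε hε => ?_, fun h ε hε => ?_⟩
  · obtain ⟨q, hq⟩ := h (√(min P.Vmin 1) * ε) (by positivity)
    refine ⟨q, lt_of_mul_lt_mul_left ((hsub q).min_mul_le_norm_sq.trans_lt ?_) hm.le⟩
    calc ‖F - P.polyPair q‖ ^ 2 < (√(min P.Vmin 1) * ε) ^ 2 := by gcongr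
      _ = min P.Vmin 1 * ε ^ 2 := by rw [mul_pow, Real.sq_sqrt hm.le]
  · obtain ⟨q, hq⟩ := h (ε / √(max P.Vmax 1)) (by positivity)
    refine ⟨q, lt_of_pow_lt_pow_left₀ 2 hε.le ((hsub q).norm_sq_le_max_mul.trans_lt ?_)⟩
    calc _ < max P.Vmax 1 * (ε / √(max P.Vmax 1)) ^ 2 := by gcongr
      _ = ε ^ 2 := by rw [div_pow, Real.sq_sqrt hM.le, mul_div_cancel₀ _ hM.ne']

theorem memW_value_grad {F : P.PairSpace} (hF : F ∈ P.energySpace) :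
    MemW P.Ω P.ρ P.p11 P.p12 P.p12 P.p22 (value F) (grad F) := by
  have hpair := isPair_value_grad F
  refine ⟨(P.isWeight.memL2_iff_memLp (measurable_value F)).2 hpair.memLp,
    ⟨⟨measurable_grad F, P.isWeight.integrable_weightMeasure_iff.1 (hpair.integrable_form hpair)⟩,
      fun v1 v2 => ?_⟩, hpair.mem_energySpace_iff.1 hF⟩
  have hweak := integral_value_mul_divPoly_add hF v1 v2
  rw [P.isWeight.integral_weightMeasure, P.isWeight.integral_weightMeasure] at hweak
  rw [← eq_neg_of_add_eq_zero_left hweak]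
  refine setIntegral_congr_fun P.isOpen_Ω.measurableSet fun x hx => ?_
  simp only [P.divRhoPhi_eq v1 v2 hx, mul_left_comm]

theorem exists_isPair_of_memW {v : ℝ × ℝ → ℝ} {h : ℝ × ℝ → ℝ × ℝ}
    (hW : MemW P.Ω P.ρ P.p11 P.p12 P.p12 P.p22 v h) : ∃ F ∈ P.energySpace, IsPair F v h := by
  obtain ⟨hv, ⟨⟨hh, hform⟩, -⟩, happrox⟩ := hW
  have hmem := memLp_energyVec hv.1 hh ((P.isWeight.memL2_iff_memLp hv.1).1 hv).integrable_sq
    (P.isWeight.integrable_weightMeasure_iff.2 hform)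
  exact ⟨hmem.toLp _, (IsPair.mem_energySpace_iff hmem.coeFn_toLp).2 happrox, hmem.coeFn_toLp⟩

end EnergySpace

section Compactness

variable (P : HelmholtzProblem)

theorem inner_polyL2_op (p q : Poly2) : ⟪P.polyL2 (P.op p), P.polyL2 q⟫_ℝ =
    ∫ x, P.form x (polyGrad p x) (polyGrad q x) ∂P.μ := by
  have hweak := P.integral_pev_mul_divPoly_add q (pderiv 0 p) (pderiv 1 p)
  rw [inner_eq_integral_mul_of_ae_eq (P.coeFn_polyL2 _) (P.coeFn_polyL2 _)]
  simp only [bilPhi_comm _ _ _ _ (polyGrad p _), P.op_apply, pev_neg, mul_neg,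
    mul_comm _ (pev q _), integral_neg]
  exact neg_eq_of_add_eq_zero_right hweak

variable {P}

theorem op_mem_restrictTotalDegree {lam : ℕ → ℝ}
    (hop : ∀ n, ∀ p ∈ restrictTotalDegree (Fin 2) ℝ (n + 1),
      P.op p - lam (n + 1) • p ∈ restrictTotalDegree (Fin 2) ℝ n)
    (n : ℕ) (p : Poly2) (hp : p ∈ restrictTotalDegree (Fin 2) ℝ n) :
    P.op p ∈ restrictTotalDegree (Fin 2) ℝ n := by
  cases n with
  | zero =>
    rw [mem_restrictTotalDegree, Nat.le_zero, totalDegree_eq_zero_iff_eq_C] at hp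
    rw [hp, P.op_apply]
    simp [PearsonWeight.divPoly]
  | succ n =>
    rw [← sub_add_cancel (P.op p) (lam (n + 1) • p)]
    exact add_mem (monotone_restrictTotalDegree n.le_succ (hop n p hp)) (Submodule.smul_mem _ _ hp)

theorem isTriangularOperator_op {lam : ℕ → ℝ}
    (hop : ∀ n, ∀ p ∈ restrictTotalDegree (Fin 2) ℝ (n + 1),
      P.op p - lam (n + 1) • p ∈ restrictTotalDegree (Fin 2) ℝ n) :
    IsTriangularOperator P.polyL2 P.op (restrictTotalDegree (Fin 2) ℝ) lam where
  symm p q := by simp only [inner_polyL2_op, bilPhi_comm _ _ _ _ (polyGrad p _)]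
  nonneg p := by
    rw [inner_polyL2_op]
    exact integral_form_self_nonneg _
  monotone_filtration := monotone_restrictTotalDegree
  map_mem := op_mem_restrictTotalDegree hop
  sub_smul_mem := hop

theorem isCompactOperator_incl {lam : ℕ → ℝ} (hlam : Monotone lam)
    (hlam_top : Tendsto lam atTop atTop)
    (hop : ∀ n, ∀ p ∈ restrictTotalDegree (Fin 2) ℝ (n + 1),
      P.op p - lam (n + 1) • p ∈ restrictTotalDegree (Fin 2) ℝ n) :
    IsCompactOperator P.incl := by
  refine (isTriangularOperator_op hop).isCompactOperator hlam hlam_top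
    (fun p => ⟨p.totalDegree, (mem_restrictTotalDegree _ _ p).2 le_rfl⟩)
    P.denseRange_polyEnergy P.incl_polyEnergy fun p => ?_
  have hnorm : ‖P.polyEnergy p‖ ^ 2 = _ := IsPair.norm_sq_eq (P.coeFn_polyPair p)
  rw [hnorm, inner_polyL2_op]
  refine le_add_of_nonneg_left (integral_nonneg_of_ae ?_)
  filter_upwards [P.ae_mem] with x hx
  exact mul_nonneg (V_pos hx).le (sq_nonneg _)

end Compactness

end HelmholtzProblem

theorem exists_norm_sub_sum_range_lt {E : Type*} [NormedAddCommGroup E] [NormedSpace ℝ E]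
    {e : ℕ → E} (he : (Submodule.span ℝ (Set.range e)).topologicalClosure = ⊤) (f : E) {ε : ℝ}
    (hε : 0 < ε) : ∃ (N : ℕ) (c : ℕ → ℝ), ‖f - ∑ i ∈ Finset.range N, c i • e i‖ < ε := by
  have hf : f ∈ (Submodule.span ℝ (Set.range e)).topologicalClosure := he ▸ Submodule.mem_top
  obtain ⟨g, hg, hfg⟩ := Metric.mem_closure_iff.1 hf ε hε
  obtain ⟨c, rfl⟩ := Finsupp.mem_span_range_iff_exists_finsupp.1 hg
  refine ⟨c.support.sup id + 1, c, ?_⟩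
  rwa [← dist_eq_norm, ← c.sum_of_support_subset (fun i hi => Finset.mem_range.2
    (Nat.lt_succ_of_le (Finset.le_sup (f := id) hi))) (fun i a => a • e i) (by simp)]

theorem coeFn_sum_smul_ae_eq {X ι : Type*} [MeasurableSpace X] {μ : Measure X} {p : ENNReal}
    {e : ι → Lp ℝ p μ} {u : ι → X → ℝ} (h : ∀ i, e i =ᵐ[μ] u i) (s : Finset ι) (c : ι → ℝ) :
    ⇑(∑ i ∈ s, c i • e i) =ᵐ[μ] fun x => ∑ i ∈ s, c i * u i x := by
  refine (Lp.coeFn_finsetSum s fun i => c i • e i).trans ?_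
  have hterm : ∀ i ∈ s, ⇑(c i • e i) =ᵐ[μ] fun x => c i * u i x := fun i _ =>
    (Lp.coeFn_smul (c i) (e i)).trans ((h i).mono fun x hx => by simp [hx])
  exact (eventuallyEq_sum hterm).trans (.of_forall fun x => Finset.sum_apply x s _)

namespace HelmholtzProblem

variable {P : HelmholtzProblem} {u v : ℝ × ℝ → ℝ} {g h : ℝ × ℝ → ℝ × ℝ}

theorem exists_integral_sub_sum_sq_lt {e : ℕ → Lp ℝ 2 P.μ} {u : ℕ → ℝ × ℝ → ℝ}
    (he : (Submodule.span ℝ (Set.range e)).topologicalClosure = ⊤) (hu : ∀ n, e n =ᵐ[P.μ] u n)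
    {f : ℝ × ℝ → ℝ} (hf : MemL2 P.Ω P.ρ f) {ε : ℝ} (hε : 0 < ε) : ∃ (N : ℕ) (c : ℕ → ℝ),
      ∫ x in P.Ω, (f x - ∑ i ∈ Finset.range N, c i * u i x) ^ 2 * P.ρ x < ε ^ 2 := by
  have hfLp := (P.isWeight.memL2_iff_memLp hf.1).1 hf
  obtain ⟨N, c, hNc⟩ := exists_norm_sub_sum_range_lt he (hfLp.toLp f) hε
  have hsub : ⇑(hfLp.toLp f - ∑ i ∈ Finset.range N, c i • e i) =ᵐ[P.μ]
      fun x => f x - ∑ i ∈ Finset.range N, c i * u i x :=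
    (Lp.coeFn_sub _ _).trans (hfLp.coeFn_toLp.sub (coeFn_sum_smul_ae_eq hu _ _))
  refine ⟨N, c, ?_⟩
  simp only [mul_comm _ (P.ρ _), ← P.isWeight.integral_weightMeasure, sq (_ - _),
    ← inner_eq_integral_mul_of_ae_eq hsub hsub]
  rw [real_inner_self_eq_norm_sq]
  gcongr

theorem IsPair.not_ae_eq_zero {F : P.PairSpace} (hF : IsPair F u g) (h0 : P.valueL F ≠ 0) :
    ¬u =ᵐ[volume.restrict P.Ω] 0 := fun hu =>
  h0 <| (Lp.eq_zero_iff_ae_eq_zero).2 (hF.coeFn_valueL.trans (ae_weightMeasure_of_ae hu))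

theorem IsPair.integral_form_add_integral_V_mul {F G : P.PairSpace} (hF : IsPair F u g)
    (hG : IsPair G v h) :
    (∫ x in P.Ω, P.ρ x * P.form x (h x) (g x)) + ∫ x in P.Ω, P.V x * u x * v x * P.ρ x =
      ⟪F, G⟫_ℝ := by
  rw [hF.inner_eq hG, add_comm]
  simp only [P.isWeight.integral_weightMeasure, bilPhi_comm _ _ _ _ (h _), mul_assoc,
    mul_left_comm (P.ρ _), mul_comm (P.ρ _)]

end HelmholtzProblem

open HelmholtzProblem in
theorem eigenfunction_basis_general (P : HelmholtzProblem) (hP : IsCompactOperator P.incl) :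
    ∃ (u : ℕ → ℝ × ℝ → ℝ) (g : ℕ → ℝ × ℝ → ℝ × ℝ) (ν : ℕ → ℝ),
      (∀ n, MemW P.Ω P.ρ P.p11 P.p12 P.p12 P.p22 (u n) (g n)) ∧
      (∀ n, ¬ (u n =ᵐ[volume.restrict P.Ω] (0 : ℝ × ℝ → ℝ))) ∧
      (∀ m n, m ≠ n → (∫ x in P.Ω, u m x * u n x * P.ρ x) = 0) ∧
      (∀ n, ∀ (v : ℝ × ℝ → ℝ) (h : ℝ × ℝ → ℝ × ℝ),
        MemW P.Ω P.ρ P.p11 P.p12 P.p12 P.p22 v h →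
          (∫ x in P.Ω, P.ρ x * bilPhi P.p11 P.p12 P.p12 P.p22 x (h x) (g n x)) +
              (∫ x in P.Ω, P.V x * u n x * v x * P.ρ x) =
            ν n * ∫ x in P.Ω, u n x * v x * P.ρ x) ∧
      (∀ n, 0 < ν n) ∧ Monotone ν ∧ Tendsto ν atTop atTop ∧
      (∀ f : ℝ × ℝ → ℝ, MemL2 P.Ω P.ρ f → ∀ ε : ℝ, 0 < ε →
        ∃ (N : ℕ) (c : ℕ → ℝ),
          (∫ x in P.Ω, (f x - ∑ i ∈ Finset.range N, c i * u i x) ^ 2 * P.ρ x) < ε ^ 2) := by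
  obtain ⟨y, ν, horth, hspan, hweak, hν_pos, hν_mono, hν_top⟩ :=
    exists_orthonormal_seq_inner_eq_mul_inner hP P.denseRange_incl
      (not_finiteDimensional_of_injective_poly2 P.injective_polyL2)
  have hpair (n : ℕ) := isPair_value_grad (y n : P.PairSpace)
  refine ⟨fun n => value (y n : P.PairSpace), fun n => grad (y n : P.PairSpace), ν,
    fun n => memW_value_grad (y n).2, fun n => (hpair n).not_ae_eq_zero (horth.ne_zero n),
    fun m n hmn => ?_, fun n v h hvh => ?_, hν_pos, hν_mono, hν_top, fun f hf ε hε =>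
      exists_integral_sub_sum_sq_lt hspan (fun n => (hpair n).coeFn_valueL) hf hε⟩
  · rw [← (hpair m).inner_valueL (hpair n)]
    exact horth.2 hmn
  · obtain ⟨F, hF, hFvh⟩ := exists_isPair_of_memW hvh
    rw [(hpair n).integral_form_add_integral_V_mul hFvh, ← (hpair n).inner_valueL hFvh]
    exact hweak n ⟨F, hF⟩

/-! ### The Jacobi weight on the triangle -/

section Triangle

open Set

theorem isOpen_Ttri : IsOpen Ttri :=
  (isOpen_lt continuous_const continuous_fst).inter <|
    (isOpen_lt continuous_const continuous_snd).inter <|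
      isOpen_lt (continuous_fst.add continuous_snd) continuous_const

theorem nonempty_Ttri : Ttri.Nonempty := ⟨(1 / 3, 1 / 3), by norm_num [Ttri]⟩

theorem Ttri_subset_Ioo_prod_Ioo : Ttri ⊆ Ioo 0 1 ×ˢ Ioo 0 1 := by
  rintro x ⟨h1, h2, h3⟩
  exact ⟨⟨h1, by linarith⟩, h2, by linarith⟩

theorem isBounded_Ttri : Bornology.IsBounded Ttri :=
  ((Metric.isBounded_Ioo 0 1).prod (Metric.isBounded_Ioo 0 1)).subset Ttri_subset_Ioo_prod_Ioo

/-- The affine involution of the triangle that fixes `x₁` and exchanges `x₂` and `1 - x₁ - x₂`. -/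
def reflectSnd (x : ℝ × ℝ) : ℝ × ℝ := (x.1, 1 - x.1 - x.2)

theorem measurePreserving_reflectSnd : MeasurePreserving reflectSnd :=
  (MeasurePreserving.id volume).skew_product (g := fun x y : ℝ => 1 - x - y) (by fun_prop)
    (.of_forall fun x => (Measure.measurePreserving_sub_left volume (1 - x)).map_eq)

theorem measurableEmbedding_reflectSnd : MeasurableEmbedding reflectSnd :=
  (MeasurableEquiv.ofInvolutive reflectSnd (fun x => by simp [reflectSnd])
    measurePreserving_reflectSnd.measurable).measurableEmbedding

theorem reflectSnd_preimage_Ttri : reflectSnd ⁻¹' Ttri = Ttri := by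
  ext x
  simp only [reflectSnd, Ttri, mem_preimage, mem_ofPred_eq]
  constructor <;> rintro ⟨h1, h2, h3⟩ <;> refine ⟨h1, ?_, ?_⟩ <;> linarith

theorem swap_preimage_Ttri : Prod.swap ⁻¹' Ttri = Ttri := by
  ext x
  simp only [Ttri, mem_preimage, mem_ofPred_eq, Prod.fst_swap, Prod.snd_swap, add_comm x.2]
  tauto

theorem setIntegral_Ttri_eq_intervalIntegral {f : ℝ × ℝ → ℝ} (hf : IntegrableOn f Ttri) :
    ∫ x in Ttri, f x = ∫ y in 0..1, ∫ x in 0..(1 - y), f (x, y) := by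
  have hT := isOpen_Ttri.measurableSet
  have hfibre (x y : ℝ) : Ttri.indicator f (x, y) =
      (Ioo 0 1).indicator (fun y => (Ioo 0 (1 - y)).indicator (fun x => f (x, y)) x) y := by
    simp only [indicator_apply, Ttri, mem_ofPred_eq, mem_Ioo]
    split_ifs <;> first | rfl | grind
  rw [← integral_indicator hT, Measure.volume_eq_prod,
    integral_prod_symm _ ((integrable_indicator_iff hT).2 hf),
    intervalIntegral.integral_of_le zero_le_one, integral_Ioc_eq_integral_Ioo,
    ← integral_indicator measurableSet_Ioo]
  congr 1 with y
  by_cases hy : y ∈ Ioo (0 : ℝ) 1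
  · simp only [hfibre, indicator_of_mem hy]
    rw [integral_indicator measurableSet_Ioo, ← integral_Ioc_eq_integral_Ioo,
      ← intervalIntegral.integral_of_le (by linarith [hy.2])]
  · simp [hfibre, indicator_of_notMem hy]

end Triangle

section JacobiWeight

variable {α β γ : ℝ}

theorem rhoT_pos (α β γ : ℝ) {x : ℝ × ℝ} (hx : x ∈ Ttri) : 0 < rhoT α β γ x := by
  obtain ⟨h1, h2, h3⟩ := hx
  have h4 : 0 < 1 - x.1 - x.2 := by linarith
  unfold rhoT
  positivity

theorem measurable_rhoT (α β γ : ℝ) : Measurable (rhoT α β γ) := by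
  unfold rhoT
  fun_prop

theorem rpow_le_inv_rpow_abs {s t a : ℝ} (hs : 0 < s) (hst : s ≤ t) (ht : t ≤ 1) :
    t ^ a ≤ s⁻¹ ^ |a| := by
  have ht0 : 0 < t := hs.trans_le hst
  calc t ^ a ≤ t ^ (-|a|) := Real.rpow_le_rpow_of_exponent_ge ht0 ht (neg_abs_le a)
    _ = t⁻¹ ^ |a| := by rw [Real.rpow_neg ht0.le, Real.inv_rpow ht0.le]
    _ ≤ s⁻¹ ^ |a| := by gcongr

-- At least one of three numbers with sum `1` is `≥ 1/3`, hence its power is bounded.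
theorem rpow_mul_rpow_mul_rpow_le {r s t : ℝ} (hr : 0 < r) (hs : 0 < s) (ht : 0 < t)
    (hsum : r + s + t = 1) (a b c : ℝ) : r ^ a * s ^ b * t ^ c ≤
      3 ^ |a| * (s ^ b * t ^ c) + 3 ^ |b| * (r ^ a * t ^ c) + 3 ^ |c| * (r ^ a * s ^ b) := by
  have hbound {q : ℝ} (e : ℝ) (h1 : 1 / 3 ≤ q) (h2 : q ≤ 1) : q ^ e ≤ 3 ^ |e| := by
    simpa using rpow_le_inv_rpow_abs (a := e) (by norm_num) h1 h2
  have ha : 0 ≤ (3 : ℝ) ^ |a| * (s ^ b * t ^ c) := by positivity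
  have hb : 0 ≤ (3 : ℝ) ^ |b| * (r ^ a * t ^ c) := by positivity
  have hc : 0 ≤ (3 : ℝ) ^ |c| * (r ^ a * s ^ b) := by positivity
  rcases le_total (1 / 3) r with h | hr'
  · have := mul_le_mul_of_nonneg_right (hbound a h (by linarith))
      (by positivity : 0 ≤ s ^ b * t ^ c)
    linarith
  rcases le_total (1 / 3) s with h | hs'
  · have := mul_le_mul_of_nonneg_right (hbound b h (by linarith))
      (by positivity : 0 ≤ r ^ a * t ^ c)
    linarith
  · have := mul_le_mul_of_nonneg_right (hbound c (by linarith : 1 / 3 ≤ t) (by linarith))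
      (by positivity : 0 ≤ r ^ a * s ^ b)
    linarith

theorem integrableOn_Ioo_rpow (hα : -1 < α) (b : ℝ) :
    IntegrableOn (fun x : ℝ => x ^ α) (Set.Ioo 0 b) :=
  (intervalIntegral.intervalIntegrable_rpow' (a := 0) (b := b) hα).1.mono_set
    Set.Ioo_subset_Ioc_self

theorem integrableOn_fst_rpow_mul_snd_rpow (hα : -1 < α) (hβ : -1 < β) :
    IntegrableOn (fun x : ℝ × ℝ => x.1 ^ α * x.2 ^ β) Ttri := by
  refine IntegrableOn.mono_set ?_ Ttri_subset_Ioo_prod_Ioo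
  rw [IntegrableOn, Measure.volume_eq_prod, ← Measure.prod_restrict]
  exact (integrableOn_Ioo_rpow hα 1).mul_prod (integrableOn_Ioo_rpow hβ 1)

theorem integrableOn_fst_rpow_mul_one_sub_rpow (hα : -1 < α) (hγ : -1 < γ) :
    IntegrableOn (fun x : ℝ × ℝ => x.1 ^ α * (1 - x.1 - x.2) ^ γ) Ttri := by
  have h := (measurePreserving_reflectSnd.integrableOn_comp_preimage
    measurableEmbedding_reflectSnd).2 (integrableOn_fst_rpow_mul_snd_rpow hα hγ)
  rwa [reflectSnd_preimage_Ttri] at h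

theorem integrableOn_snd_rpow_mul_one_sub_rpow (hβ : -1 < β) (hγ : -1 < γ) :
    IntegrableOn (fun x : ℝ × ℝ => x.2 ^ β * (1 - x.1 - x.2) ^ γ) Ttri := by
  have hswap : MeasurePreserving (Prod.swap : ℝ × ℝ → ℝ × ℝ) := Measure.measurePreserving_swap
  have h := (hswap.integrableOn_comp_preimage MeasurableEquiv.prodComm.measurableEmbedding).2
    (integrableOn_fst_rpow_mul_one_sub_rpow hβ hγ)
  simpa only [swap_preimage_Ttri, Function.comp_def, Prod.fst_swap, Prod.snd_swap,
    sub_right_comm (1 : ℝ) (Prod.snd _)] using h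

theorem integrableOn_rhoT (hα : -1 < α) (hβ : -1 < β) (hγ : -1 < γ) :
    IntegrableOn (rhoT α β γ) Ttri := by
  refine Integrable.mono'
    ((((integrableOn_snd_rpow_mul_one_sub_rpow hβ hγ).const_mul (3 ^ |α|)).add
      ((integrableOn_fst_rpow_mul_one_sub_rpow hα hγ).const_mul (3 ^ |β|))).add
        ((integrableOn_fst_rpow_mul_snd_rpow hα hβ).const_mul (3 ^ |γ|)))
    (measurable_rhoT α β γ).aestronglyMeasurable ?_
  filter_upwards [ae_restrict_mem isOpen_Ttri.measurableSet] with x hx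
  rw [Real.norm_of_nonneg (rhoT_pos α β γ hx).le]
  exact rpow_mul_rpow_mul_rpow_le hx.1 hx.2.1 (by linarith [hx.2.2]) (by ring) α β γ

theorem isWeight_rhoT (hα : -1 < α) (hβ : -1 < β) (hγ : -1 < γ) : IsWeight Ttri (rhoT α β γ) :=
  ⟨measurable_rhoT α β γ, (ae_restrict_mem isOpen_Ttri.measurableSet).mono fun _ => rhoT_pos α β γ,
    integrableOn_rhoT hα hβ hγ⟩

theorem integrableOn_rhoT_mul (hα : -1 < α) (hβ : -1 < β) (hγ : -1 < γ) {f : ℝ × ℝ → ℝ}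
    (hf : Continuous f) : IntegrableOn (fun x => rhoT α β γ x * f x) Ttri :=
  (integrableOn_rhoT hα hβ hγ).mul_continuousOn_of_subset hf.continuousOn
    isOpen_Ttri.measurableSet isBounded_Ttri.isCompact_closure subset_closure

theorem hasFDerivAt_rhoT (α β γ : ℝ) {x : ℝ × ℝ} (hx : x ∈ Ttri) :
    HasFDerivAt (rhoT α β γ)
      ((rhoT α β γ x * (α / x.1 - γ / (1 - x.1 - x.2))) • ContinuousLinearMap.fst ℝ ℝ ℝ +
      (rhoT α β γ x * (β / x.2 - γ / (1 - x.1 - x.2))) • ContinuousLinearMap.snd ℝ ℝ ℝ) x := by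
  obtain ⟨h1, h2, h3⟩ := hx
  have h4 : 0 < 1 - x.1 - x.2 := by linarith
  have hfst : HasFDerivAt Prod.fst (ContinuousLinearMap.fst ℝ ℝ ℝ) x := hasFDerivAt_fst
  have hsnd : HasFDerivAt Prod.snd (ContinuousLinearMap.snd ℝ ℝ ℝ) x := hasFDerivAt_snd
  refine (((hfst.rpow_const (.inl h1.ne')).mul (hsnd.rpow_const (.inl h2.ne'))).mul
    (((hfst.const_sub 1).sub hsnd).rpow_const (.inl h4.ne'))).congr_fderiv ?_
  ext <;> simp [rhoT, Real.rpow_sub_one h1.ne', Real.rpow_sub_one h2.ne',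
    Real.rpow_sub_one h4.ne'] <;> field_simp <;> ring

end JacobiWeight

section IntegrationByParts

variable {α β γ : ℝ}

theorem hasDerivAt_rpow_mul_sub_rpow_mul {L x f' : ℝ} {f : ℝ → ℝ} (hx : x ∈ Set.Ioo 0 L)
    (hf : HasDerivAt f f' x) :
    HasDerivAt (fun t => t ^ (α + 1) * (L - t) ^ (γ + 1) * f t)
      (x ^ α * (L - x) ^ γ * (((α + 1) * (L - x) - (γ + 1) * x) * f x + x * (L - x) * f')) x := by
  have h1 : x ≠ 0 := hx.1.ne'
  have h2 : L - x ≠ 0 := (sub_pos.2 hx.2).ne'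
  refine (((hasDerivAt_id x).rpow_const (.inl h1)).mul
    (((hasDerivAt_id x).const_sub L).rpow_const (.inl h2)) |>.mul hf).congr_deriv ?_
  simp only [id, Pi.mul_apply, add_sub_cancel_right, Real.rpow_add_one h1, Real.rpow_add_one h2]
  ring

theorem intervalIntegrable_rpow_mul_sub_rpow_mul (hα : -1 < α) (hγ : -1 < γ) {L : ℝ} (hL : 0 ≤ L)
    {f f' : ℝ → ℝ} (hf : Continuous f) (hf' : Continuous f') :
    IntervalIntegrable (fun x => x ^ α * (L - x) ^ γ *
      (((α + 1) * (L - x) - (γ + 1) * x) * f x + x * (L - x) * f' x)) volume 0 L := by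
  have hcont : Continuous fun x : ℝ => x ^ (α + 1) :=
    Real.continuous_rpow_const (by linarith)
  have hcont' : Continuous fun x : ℝ => (L - x) ^ (γ + 1) :=
    (Real.continuous_rpow_const (by linarith)).comp (continuous_sub_left L)
  have hintegrable : IntervalIntegrable (fun x : ℝ => x ^ α) volume 0 L :=
    intervalIntegral.intervalIntegrable_rpow' hα
  have hintegrable' : IntervalIntegrable (fun x : ℝ => (L - x) ^ γ) volume 0 L := by
    simpa using
      ((intervalIntegral.intervalIntegrable_rpow' (a := 0) (b := L) hγ).comp_sub_left L).symm
  have hsum := ((hintegrable.mul_continuousOn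
    (g := fun x => (L - x) ^ (γ + 1) * ((α + 1) * f x + x * f' x)) (by fun_prop)).sub
    (hintegrable'.mul_continuousOn (g := fun x => x ^ (α + 1) * ((γ + 1) * f x)) (by fun_prop)))
  refine hsum.congr_uIoo fun x hx => ?_
  rw [Set.uIoo_of_le hL] at hx
  simp only [Real.rpow_add_one hx.1.ne', Real.rpow_add_one (sub_pos.2 hx.2).ne']
  ring

theorem integral_rpow_mul_sub_rpow_mul_eq_zero (hα : -1 < α) (hγ : -1 < γ) {L : ℝ} (hL : 0 ≤ L)
    {f f' : ℝ → ℝ} (hf' : Continuous f') (hderiv : ∀ x, HasDerivAt f (f' x) x) :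
    ∫ x in 0..L, x ^ α * (L - x) ^ γ *
      (((α + 1) * (L - x) - (γ + 1) * x) * f x + x * (L - x) * f' x) = 0 := by
  have hf : Continuous f := continuous_iff_continuousAt.2 fun x => (hderiv x).continuousAt
  have hα' : 0 < α + 1 := by linarith
  have hγ' : 0 < γ + 1 := by linarith
  have hcont : Continuous fun t : ℝ => t ^ (α + 1) * (L - t) ^ (γ + 1) * f t :=
    ((Real.continuous_rpow_const hα'.le).mul
      ((Real.continuous_rpow_const hγ'.le).comp (continuous_sub_left L))).mul hf
  rw [intervalIntegral.integral_eq_sub_of_hasDerivAt_of_le hL hcont.continuousOn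
    (fun x hx => hasDerivAt_rpow_mul_sub_rpow_mul hx (hderiv x))
    (intervalIntegrable_rpow_mul_sub_rpow_mul hα hγ hL hf hf')]
  simp [Real.zero_rpow hα'.ne', Real.zero_rpow hγ'.ne']

-- `div (ρ x₁ (1 - x₁ - x₂) f, 0)` has integral zero.
theorem integral_rhoT_mul_fst_eq_zero (hα : -1 < α) (hβ : -1 < β) (hγ : -1 < γ)
    {f f' : ℝ × ℝ → ℝ} (hf : Continuous f) (hf' : Continuous f')
    (hderiv : ∀ x y, HasDerivAt (fun t => f (t, y)) (f' (x, y)) x) :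
    ∫ x in Ttri, rhoT α β γ x * (((α + 1) * (1 - x.1 - x.2) - (γ + 1) * x.1) * f x +
      x.1 * (1 - x.1 - x.2) * f' x) = 0 := by
  rw [setIntegral_Ttri_eq_intervalIntegral (integrableOn_rhoT_mul hα hβ hγ (by fun_prop))]
  refine intervalIntegral.integral_zero_ae (.of_forall fun y hy => ?_)
  rw [Set.uIoc_of_le zero_le_one] at hy
  have hfibre := integral_rpow_mul_sub_rpow_mul_eq_zero hα hγ (sub_nonneg.2 hy.2)
    (f' := fun x => f' (x, y)) (by fun_prop) fun x => hderiv x y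
  refine Eq.trans ?_ (mul_eq_zero_of_right (y ^ β) hfibre)
  rw [← intervalIntegral.integral_const_mul]
  refine intervalIntegral.integral_congr fun x _ => ?_
  simp only [rhoT, sub_right_comm 1 x y]
  ring

variable (p : Poly2)

open MvPolynomial

theorem hasDerivAt_pev_line {x y : ℝ → ℝ} {x' y' t : ℝ} (hx : HasDerivAt x x' t)
    (hy : HasDerivAt y y' t) : HasDerivAt (fun s => pev p (x s, y s))
      (pev (pderiv 0 p) (x t, y t) * x' + pev (pderiv 1 p) (x t, y t) * y') t := by
  simpa [Function.comp_def] using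
    (hasFDerivAt_pev p (x t, y t)).comp_hasDerivAt t (hx.prodMk hy)

theorem integral_rhoT_mul_edge_fst (hα : -1 < α) (hβ : -1 < β) (hγ : -1 < γ) :
    ∫ x in Ttri, rhoT α β γ x * pev ((C (α + 1) * (1 - X 0 - X 1) - C (γ + 1) * X 0) * p +
      X 0 * (1 - X 0 - X 1) * pderiv 0 p) x = 0 := by
  simpa using integral_rhoT_mul_fst_eq_zero hα hβ hγ (continuous_pev p)
    (continuous_pev (pderiv 0 p)) fun x y => by
      simpa using hasDerivAt_pev_line p (hasDerivAt_id x) (hasDerivAt_const x y)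

theorem integral_rhoT_mul_edge_snd (hα : -1 < α) (hβ : -1 < β) (hγ : -1 < γ) :
    ∫ x in Ttri, rhoT α β γ x * pev ((C (β + 1) * (1 - X 0 - X 1) - C (γ + 1) * X 1) * p +
      X 1 * (1 - X 0 - X 1) * pderiv 1 p) x = 0 := by
  have hswap : MeasurePreserving (Prod.swap : ℝ × ℝ → ℝ × ℝ) := Measure.measurePreserving_swap
  have h := integral_rhoT_mul_fst_eq_zero hβ hα hγ (f := fun x => pev p x.swap)
    (f' := fun x => pev (pderiv 1 p) x.swap) (by fun_prop) (by fun_prop) fun x y => by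
      simpa using hasDerivAt_pev_line p (hasDerivAt_const x y) (hasDerivAt_id x)
  rw [← hswap.setIntegral_preimage_emb MeasurableEquiv.prodComm.measurableEmbedding,
    swap_preimage_Ttri] at h
  rw [← h]
  congr 1 with x
  simp [rhoT, sub_right_comm 1 x.2, mul_comm (x.2 ^ β)]

theorem integral_rhoT_mul_edge_diag (hα : -1 < α) (hβ : -1 < β) (hγ : -1 < γ) :
    ∫ x in Ttri, rhoT α β γ x * pev ((C (α + 1) * X 1 - C (β + 1) * X 0) * p +
      X 0 * X 1 * (pderiv 0 p - pderiv 1 p)) x = 0 := by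
  have h := integral_rhoT_mul_fst_eq_zero hα hγ hβ (f := fun x => pev p (reflectSnd x))
    (f' := fun x => pev (pderiv 0 p - pderiv 1 p) (reflectSnd x))
    (by unfold reflectSnd; fun_prop) (by unfold reflectSnd; fun_prop) fun x y => by
      simpa [sub_eq_add_neg, reflectSnd] using hasDerivAt_pev_line p (hasDerivAt_id x)
        (((hasDerivAt_id x).const_sub 1).sub_const y)
  rw [← measurePreserving_reflectSnd.setIntegral_preimage_emb measurableEmbedding_reflectSnd,
    reflectSnd_preimage_Ttri] at h
  rw [← h]
  congr 1 with x
  simp [rhoT, reflectSnd, mul_right_comm _ (x.2 ^ β)]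

end IntegrationByParts

section JacobiProblem

open MvPolynomial

variable {α β γ : ℝ}

/-- The weight `x₁^α x₂^β (1-x₁-x₂)^γ` and the matrix `Φ` on the triangle, with their Pearson
equation. -/
def jacobiPearson (α β γ : ℝ) : PearsonWeight where
  Ω := Ttri
  ρ := rhoT α β γ
  p11 := q11
  p12 := q12
  p22 := q22
  ψ1 := C (α + 1) - C (α + β + γ + 3) * X 0
  ψ2 := C (β + 1) - C (α + β + γ + 3) * X 1
  differentiableAt x hx := (hasFDerivAt_rhoT α β γ hx).differentiableAt
  pearson_fst x hx := by
    obtain ⟨h1, h2, h3⟩ := id hx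
    have h4 : 1 - x.1 - x.2 ≠ 0 := by linarith
    simp only [fderiv_mul_pev (hasFDerivAt_rhoT α β γ hx)]
    simp only [Fin.isValue, q11, Derivation.leibniz, map_sub, Derivation.map_one_eq_zero, pderiv_X,
      Pi.single_eq_same, zero_sub, smul_eq_mul, mul_neg, mul_one, pev_add, pev_neg, pev_X_zero,
      pev_sub, pev_one, ne_eq, zero_ne_one, not_false_eq_true, Pi.single_eq_of_ne, sub_self,
      mul_zero, add_zero, smul_add, pev_mul, add_apply, smul_apply, ContinuousLinearMap.coe_fst',
      ContinuousLinearMap.coe_snd', q12, map_neg, one_ne_zero, zero_add, pev_X_one, neg_smul,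
      neg_apply, neg_zero, C_add, C_1, pev_C]
    field_simp
    ring
  pearson_snd x hx := by
    obtain ⟨h1, h2, h3⟩ := id hx
    have h4 : 1 - x.1 - x.2 ≠ 0 := by linarith
    simp only [fderiv_mul_pev (hasFDerivAt_rhoT α β γ hx)]
    simp only [Fin.isValue, q12, map_neg, Derivation.leibniz, pderiv_X, ne_eq, one_ne_zero,
      not_false_eq_true, Pi.single_eq_of_ne, smul_eq_mul, mul_zero, Pi.single_eq_same, mul_one,
      zero_add, pev_neg, pev_X_one, zero_ne_one, add_zero, pev_X_zero, smul_add, pev_mul, neg_smul,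
      add_apply, smul_apply, ContinuousLinearMap.coe_fst', mul_neg, ContinuousLinearMap.coe_snd',
      neg_apply, neg_zero, q22, map_sub, Derivation.map_one_eq_zero, sub_self, zero_sub, pev_add,
      pev_sub, pev_one, C_add, C_1, pev_C]
    field_simp
    ring

theorem jacobiPearson_divPoly_eq (v1 v2 : Poly2) : (jacobiPearson α β γ).divPoly v1 v2 =
    ((C (α + 1) * (1 - X 0 - X 1) - C (γ + 1) * X 0) * v1 + X 0 * (1 - X 0 - X 1) * pderiv 0 v1) +
    ((C (β + 1) * (1 - X 0 - X 1) - C (γ + 1) * X 1) * v2 + X 1 * (1 - X 0 - X 1) * pderiv 1 v2) +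
    ((C (α + 1) * X 1 - C (β + 1) * X 0) * (v1 - v2) +
      X 0 * X 1 * (pderiv 0 (v1 - v2) - pderiv 1 (v1 - v2))) := by
  simp only [PearsonWeight.divPoly, jacobiPearson, q11, q12, q22, map_sub, C_add, map_one]
  simp only [map_ofNat]
  ring

theorem integral_rhoT_mul_divPoly (hα : -1 < α) (hβ : -1 < β) (hγ : -1 < γ) (v1 v2 : Poly2) :
    ∫ x in Ttri, rhoT α β γ x * pev ((jacobiPearson α β γ).divPoly v1 v2) x = 0 := by
  have hintegrable (p : Poly2) := integrableOn_rhoT_mul hα hβ hγ (continuous_pev p)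
  have hadd (p q : Poly2) : ∫ x in Ttri, rhoT α β γ x * pev (p + q) x =
      (∫ x in Ttri, rhoT α β γ x * pev p x) + ∫ x in Ttri, rhoT α β γ x * pev q x := by
    rw [← integral_add (hintegrable p) (hintegrable q)]
    simp only [pev_add, mul_add]
  rw [jacobiPearson_divPoly_eq, hadd, hadd (_ + _), integral_rhoT_mul_edge_fst _ hα hβ hγ,
    integral_rhoT_mul_edge_snd _ hα hβ hγ, integral_rhoT_mul_edge_diag _ hα hβ hγ]
  simp

theorem symPosDef_Ttri : SymPosDef Ttri q11 q12 q12 q22 := by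
  refine ⟨rfl, fun x ⟨h1, h2, h3⟩ ζ hζ => ?_⟩
  have h4 : 0 < 1 - x.1 - x.2 := by linarith
  have hform : bilPhi q11 q12 q12 q22 x ζ ζ = x.1 * (1 - x.1 - x.2) * ζ.1 ^ 2 +
      x.2 * (1 - x.1 - x.2) * ζ.2 ^ 2 + x.1 * x.2 * (ζ.1 - ζ.2) ^ 2 := by
    simp only [bilPhi, q11, q12, q22, pev_mul, pev_sub, pev_neg, pev_one, pev_X_zero, pev_X_one]
    ring
  rw [hform]
  rcases not_and_or.1 (mt Prod.ext_iff.2 hζ) with h | h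
  · have : ζ.1 ≠ 0 := h
    positivity
  · have : ζ.2 ≠ 0 := h
    positivity

/-- The eigenvalue problem for the potential `2 + x₁² + x₂²` on the triangle with Jacobi weight. -/
def jacobiHelmholtz (hα : -1 < α) (hβ : -1 < β) (hγ : -1 < γ) : HelmholtzProblem where
  toPearsonWeight := jacobiPearson α β γ
  V x := 2 + x.1 ^ 2 + x.2 ^ 2
  Vmin := 2
  Vmax := 4
  isOpen_Ω := isOpen_Ttri
  nonempty_Ω := nonempty_Ttri
  isBounded_Ω := isBounded_Ttri
  isWeight := isWeight_rhoT hα hβ hγ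
  symPosDef := symPosDef_Ttri
  integral_mul_divPoly := integral_rhoT_mul_divPoly hα hβ hγ
  measurable_V := by fun_prop
  Vmin_pos := two_pos
  Vmin_le x _ := by nlinarith
  le_Vmax x hx := by
    obtain ⟨h1, h2, h3⟩ := hx
    nlinarith

/-- The eigenvalue of `u ↦ -ρ⁻¹ div(ρΦ∇u)` on polynomials of degree `n` modulo lower degree. -/
def jacobiEigenvalue (α β γ : ℝ) (n : ℕ) : ℝ := n * (n + (α + β + γ + 2))

theorem monotone_jacobiEigenvalue (h : -3 < α + β + γ) : Monotone (jacobiEigenvalue α β γ) := by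
  refine monotone_nat_of_le_succ fun n => ?_
  simp only [jacobiEigenvalue, Nat.cast_succ]
  nlinarith [n.cast_nonneg (α := ℝ)]

theorem tendsto_jacobiEigenvalue (α β γ : ℝ) : Tendsto (jacobiEigenvalue α β γ) atTop atTop :=
  tendsto_natCast_atTop_atTop.atTop_mul_atTop₀ <|
    tendsto_atTop_add_const_right _ _ tendsto_natCast_atTop_atTop

theorem isHomogeneous_X_mul_pderiv {σ R : Type*} [CommSemiring R] {p : MvPolynomial σ R} {n : ℕ}
    (hp : p.IsHomogeneous n) (i j : σ) : (X i * pderiv j p).IsHomogeneous n := by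
  cases n with
  | zero =>
    rw [totalDegree_eq_zero_iff_eq_C.1 (Nat.le_zero.1 hp.totalDegree_le), pderiv_C, mul_zero]
    exact isHomogeneous_zero _ _ _
  | succ n => simpa [add_comm] using (isHomogeneous_X R i).mul (hp.pderiv (i := j))

-- The leading part of the operator is a polynomial in the Euler operator `∑ xᵢ ∂ᵢ`.
theorem jacobiPearson_op_sub_smul_of_isHomogeneous {p : Poly2} {n : ℕ} (hp : p.IsHomogeneous n) :
    (jacobiPearson α β γ).op p - jacobiEigenvalue α β γ n • p =
      -(C (α + 1) * pderiv 0 p + C (β + 1) * pderiv 1 p + X 0 * pderiv 0 (pderiv 0 p) +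
        X 1 * pderiv 1 (pderiv 1 p)) := by
  have euler := hp.sum_X_mul_pderiv
  have euler_fst := (hp.pderiv (i := 0)).sum_X_mul_pderiv
  have euler_snd := (hp.pderiv (i := 1)).sum_X_mul_pderiv
  simp only [Fin.sum_univ_two, nsmul_eq_mul] at euler euler_fst euler_snd
  cases n with
  | zero =>
    rw [totalDegree_eq_zero_iff_eq_C.1 (Nat.le_zero.1 hp.totalDegree_le)]
    simp [PearsonWeight.op_apply, PearsonWeight.divPoly, jacobiEigenvalue]
  | succ n =>
    have heig : C (jacobiEigenvalue α β γ (n + 1)) =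
        ((n + 1 : ℕ) : Poly2) * ((n : Poly2) + C (α + β + γ + 3)) := by
      rw [← map_natCast C, ← map_natCast C, ← C_add, ← C_mul, jacobiEigenvalue]
      push_cast
      ring_nf
    rw [smul_eq_C_mul, heig, PearsonWeight.op_apply]
    simp only [PearsonWeight.divPoly, jacobiPearson, q11, q12, q22]
    rw [Nat.add_sub_cancel] at euler_fst euler_snd
    linear_combination (C (α + β + γ + 3) + (n : Poly2)) * euler + X 0 * euler_fst + X 1 * euler_snd

theorem mem_restrictTotalDegree_of_isHomogeneous {σ R : Type*} [CommSemiring R]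
    {p : MvPolynomial σ R} {m n : ℕ} (hp : p.IsHomogeneous m) (hmn : m ≤ n) :
    p ∈ restrictTotalDegree σ R n :=
  (mem_restrictTotalDegree σ n p).2 (hp.totalDegree_le.trans hmn)

theorem jacobiPearson_op_sub_smul_mem_of_isHomogeneous {p : Poly2} {n : ℕ}
    (hp : p.IsHomogeneous n) : (jacobiPearson α β γ).op p - jacobiEigenvalue α β γ n • p ∈
      restrictTotalDegree (Fin 2) ℝ (n - 1) := by
  have hfst : (pderiv 0 p).IsHomogeneous (n - 1) := hp.pderiv
  have hsnd : (pderiv 1 p).IsHomogeneous (n - 1) := hp.pderiv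
  rw [jacobiPearson_op_sub_smul_of_isHomogeneous hp]
  refine neg_mem (add_mem (add_mem (add_mem ?_ ?_) ?_) ?_) <;>
    apply mem_restrictTotalDegree_of_isHomogeneous _ le_rfl
  exacts [hfst.C_mul _, hsnd.C_mul _, isHomogeneous_X_mul_pderiv hfst 0 0,
    isHomogeneous_X_mul_pderiv hsnd 1 1]

theorem jacobiPearson_op_sub_smul_mem (n : ℕ) (p : Poly2)
    (hp : p ∈ restrictTotalDegree (Fin 2) ℝ (n + 1)) :
    (jacobiPearson α β γ).op p - jacobiEigenvalue α β γ (n + 1) • p ∈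
      restrictTotalDegree (Fin 2) ℝ n := by
  rw [mem_restrictTotalDegree] at hp
  rw [← sum_homogeneousComponent p, map_sum, Finset.smul_sum, ← Finset.sum_sub_distrib]
  refine sum_mem fun i hi => ?_
  have hhom := homogeneousComponent_isHomogeneous i p
  have hlow := jacobiPearson_op_sub_smul_mem_of_isHomogeneous (α := α) (β := β) (γ := γ) hhom
  rcases (show i ≤ n + 1 by grind).eq_or_lt with rfl | hin
  · exact hlow
  · rw [← sub_add_sub_cancel _ (jacobiEigenvalue α β γ i • homogeneousComponent i p), ← sub_smul]
    exact add_mem (monotone_restrictTotalDegree (by lia) hlow) (Submodule.smul_mem _ _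
      (mem_restrictTotalDegree_of_isHomogeneous hhom (Nat.le_of_lt_succ hin)))

theorem isCompactOperator_incl_jacobiHelmholtz (hα : -1 < α) (hβ : -1 < β) (hγ : -1 < γ) :
    IsCompactOperator (jacobiHelmholtz hα hβ hγ).incl :=
  HelmholtzProblem.isCompactOperator_incl (monotone_jacobiEigenvalue (by linarith))
    (tendsto_jacobiEigenvalue α β γ) jacobiPearson_op_sub_smul_mem

end JacobiProblem

/-- `L²(T,ρ)` has an orthogonal basis of weak eigenfunctions of the
degenerate Helmholtz operator; the eigenvalues are positive and (suitably ordered) tend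
to `+∞`. -/
theorem eigenfunction_basis
    (α β γ : ℝ) (hα : -1 < α) (hβ : -1 < β) (hγ : -1 < γ) :
    ∃ (u : ℕ → ℝ × ℝ → ℝ) (g : ℕ → ℝ × ℝ → ℝ × ℝ) (ν : ℕ → ℝ),
      (∀ n, MemW Ttri (rhoT α β γ) q11 q12 q12 q22 (u n) (g n)) ∧
      (∀ n, ¬ (u n =ᵐ[volume.restrict Ttri] (0 : ℝ × ℝ → ℝ))) ∧
      (∀ m n, m ≠ n → (∫ x in Ttri, u m x * u n x * rhoT α β γ x) = 0) ∧
      (∀ n, ∀ (v : ℝ × ℝ → ℝ) (h : ℝ × ℝ → ℝ × ℝ),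
        MemW Ttri (rhoT α β γ) q11 q12 q12 q22 v h →
          (∫ x in Ttri, rhoT α β γ x * bilPhi q11 q12 q12 q22 x (h x) (g n x)) +
              (∫ x in Ttri, (2 + x.1 ^ 2 + x.2 ^ 2) * u n x * v x * rhoT α β γ x) =
            ν n * ∫ x in Ttri, u n x * v x * rhoT α β γ x) ∧
      (∀ n, 0 < ν n) ∧ Monotone ν ∧ Tendsto ν atTop atTop ∧
      (∀ f : ℝ × ℝ → ℝ, MemL2 Ttri (rhoT α β γ) f → ∀ ε : ℝ, 0 < ε →
        ∃ (N : ℕ) (c : ℕ → ℝ),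
          (∫ x in Ttri, (f x - ∑ i ∈ Finset.range N, c i * u i x) ^ 2 * rhoT α β γ x)
            < ε ^ 2) :=
  eigenfunction_basis_general (jacobiHelmholtz hα hβ hγ)
    (isCompactOperator_incl_jacobiHelmholtz hα hβ hγ)
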